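/- For any hypothesis adjacency matrix V*: (i) if the true adjacency matrix V satisfies V ≠ V*, then limsup_{n→∞} P(V̂_n = V*) ≤ 1 − F_r(I_th); (ii) if V = V*, then liminf_{n→∞} P(V̂_n = V*) ≥ max{1 − N_0·(1 − F_r(I_th)), 0}, where r = |𝒳|^{mk}(|𝒳|^m − 1), N_1 is the number of off-diagonal ones of V*, and N_0 = m(m−1) − N_1. -/

import Mathlib

open MeasureTheory Filter Finset
open scoped BigOperators Topology ENNReal NNReal Classical

namespace DIG

/-- Extended-real logarithm: `⊥` on nonpositive reals, so that the log-likelihood of an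
impossible observation is `-∞`. -/
noncomputable def elog (x : ℝ) : EReal := if x ≤ 0 then (⊥ : EReal) else ((Real.log x : ℝ) : EReal)

/-- A block of length `L` over the alphabet `𝒳`. -/
abbrev Blk (𝒳 : Type*) (L : ℕ) : Type _ := Fin L → 𝒳

/-- A joint history of the three processes: three `k`-blocks. -/
abbrev Hist (𝒳 : Type*) (k : ℕ) : Type _ := Blk 𝒳 k × Blk 𝒳 k × Blk 𝒳 k

/-- A joint symbol of the three processes. -/
abbrev Sym (𝒳 : Type*) : Type _ := 𝒳 × 𝒳 × 𝒳

variable {𝒳 : Type*} [Fintype 𝒳] [DecidableEq 𝒳] [Nonempty 𝒳]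
variable {Ω : Type*} [MeasurableSpace Ω]

/-- The real-valued measure of a set. -/
noncomputable def mreal (μ : MeasureTheory.Measure Ω) (s : Set Ω) : ℝ := (μ s).toReal

/-- Kullback-Leibler divergence between two pmfs on a finite set (with the usual
`0 log 0 = 0` convention, automatic since `0 * x = 0`). -/
noncomputable def KLfin {S : Type*} [Fintype S] (p q : S → ℝ) : ℝ :=
  ∑ s, p s * Real.log (p s / q s)

/-- Shannon entropy of a pmf on a finite set. -/
noncomputable def Hent {S : Type*} [Fintype S] (p : S → ℝ) : ℝ :=
  -∑ s, p s * Real.log (p s)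

/-- Pushforward (marginal) of a pmf along a map of finite sets. -/
noncomputable def pushf {S T : Type*} [Fintype S] [DecidableEq T] (g : S → T) (p : S → ℝ) :
    T → ℝ := fun t => ∑ s, if g s = t then p s else 0

/-! ### Marginals of a joint distribution of `(k+1)`-blocks of three processes -/

/-- Marginal of `(Y₁ᵏ, Z₁ᵏ⁺¹)`. -/
noncomputable def margYkZ {k : ℕ} (p : Blk 𝒳 (k+1) → Blk 𝒳 (k+1) → Blk 𝒳 (k+1) → ℝ)
    (β : Blk 𝒳 k) (c : Blk 𝒳 (k+1)) : ℝ :=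
  ∑ a : Blk 𝒳 (k+1), ∑ yl : 𝒳, p a (Fin.snoc β yl) c

/-- Marginal of `(Y₁ᵏ⁺¹, Z₁ᵏ⁺¹)`. -/
noncomputable def margYZ {k : ℕ} (p : Blk 𝒳 (k+1) → Blk 𝒳 (k+1) → Blk 𝒳 (k+1) → ℝ)
    (b c : Blk 𝒳 (k+1)) : ℝ :=
  ∑ a : Blk 𝒳 (k+1), p a b c

/-- Marginal of `(X₁ᵏ⁺¹, Y₁ᵏ, Z₁ᵏ⁺¹)`. -/
noncomputable def margXYkZ {k : ℕ} (p : Blk 𝒳 (k+1) → Blk 𝒳 (k+1) → Blk 𝒳 (k+1) → ℝ)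
    (a : Blk 𝒳 (k+1)) (β : Blk 𝒳 k) (c : Blk 𝒳 (k+1)) : ℝ :=
  ∑ yl : 𝒳, p a (Fin.snoc β yl) c

/-- Marginal of `(X₁ᵏ, Y₁ᵏ, Z₁ᵏ)` (the first `k` coordinates of each block). -/
noncomputable def margK {k : ℕ} (p : Blk 𝒳 (k+1) → Blk 𝒳 (k+1) → Blk 𝒳 (k+1) → ℝ)
    (α β γ : Blk 𝒳 k) : ℝ :=
  ∑ xl : 𝒳, ∑ yl : 𝒳, ∑ zl : 𝒳, p (Fin.snoc α xl) (Fin.snoc β yl) (Fin.snoc γ zl)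

/-- Conditional mutual information `I(Y_{k+1}; X₁ᵏ⁺¹ | Y₁ᵏ, Z₁ᵏ⁺¹)` computed under the joint
pmf `p` of the three `(k+1)`-blocks. -/
noncomputable def condMI {k : ℕ} (p : Blk 𝒳 (k+1) → Blk 𝒳 (k+1) → Blk 𝒳 (k+1) → ℝ) : ℝ :=
  ∑ a : Blk 𝒳 (k+1), ∑ b : Blk 𝒳 (k+1), ∑ c : Blk 𝒳 (k+1),
    p a b c * Real.log ((p a b c * margYkZ p (Fin.init b) c) /
      (margYZ p b c * margXYkZ p a (Fin.init b) c))

/-! ### Transition matrices and factorization (absence of the edge `X → Y`) -/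

/-- `Q` is a transition probability matrix for the joint `k`-th order Markov process. -/
def IsTransMat {k : ℕ} (Q : Hist 𝒳 k → Sym 𝒳 → ℝ) : Prop :=
  (∀ h s, 0 ≤ Q h s) ∧ (∀ h, ∑ s : Sym 𝒳, Q h s = 1)

/-- The factorization of the transition matrix expressing the absence of the edge `X → Y`:
`Q(x',y',z' | hx,hy,hz) = Q1(x',z' | hx,hy,hz) · Q2(y' | hy, (hz,z'))`. -/
def IsFactorized {k : ℕ} (Q : Hist 𝒳 k → Sym 𝒳 → ℝ) : Prop :=
  ∃ (Q1 : Hist 𝒳 k → 𝒳 × 𝒳 → ℝ) (Q2 : Blk 𝒳 k × Blk 𝒳 (k+1) → 𝒳 → ℝ),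
    (∀ h p, 0 ≤ Q1 h p) ∧ (∀ h, ∑ p : 𝒳 × 𝒳, Q1 h p = 1) ∧
    (∀ h y, 0 ≤ Q2 h y) ∧ (∀ h, ∑ y : 𝒳, Q2 h y = 1) ∧
    (∀ (hx hy hz : Blk 𝒳 k) (x' y' z' : 𝒳),
      Q (hx, hy, hz) (x', y', z') = Q1 (hx, hy, hz) (x', z') * Q2 (hy, Fin.snoc hz z') y')

/-! ### The process, stationarity, Markov property, Assumption 3 -/

/-- The event that the length-`L` blocks of the three processes starting at time `t`
equal `(a, b, c)`. -/
def blockEvent (X Y Z : ℕ → Ω → 𝒳) (t L : ℕ) (a b c : Blk 𝒳 L) : Set Ω :=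
  {ω | ∀ i : Fin L, X (t + i) ω = a i ∧ Y (t + i) ω = b i ∧ Z (t + i) ω = c i}

/-- Joint stationarity of the three processes. -/
def Stationary (μ : MeasureTheory.Measure Ω) (X Y Z : ℕ → Ω → 𝒳) : Prop :=
  ∀ (t L : ℕ) (a b c : Blk 𝒳 L),
    μ (blockEvent X Y Z t L a b c) = μ (blockEvent X Y Z 0 L a b c)

/-- The joint process is Markov of order `k` with transition matrix `Q`: conditionally on the
entire past, the next joint symbol is distributed according to `Q` applied to the last
`k`-block of the past. -/
def MarkovOfOrder (μ : MeasureTheory.Measure Ω) (X Y Z : ℕ → Ω → 𝒳) (k : ℕ)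
    (Q : Hist 𝒳 k → Sym 𝒳 → ℝ) : Prop :=
  ∀ (j : ℕ) (pa pb pc : Blk 𝒳 j) (a b c : Blk 𝒳 k) (s : Sym 𝒳),
    mreal μ (blockEvent X Y Z 0 j pa pb pc ∩ blockEvent X Y Z j k a b c ∩
        {ω | X (j + k) ω = s.1 ∧ Y (j + k) ω = s.2.1 ∧ Z (j + k) ω = s.2.2})
      = Q (a, b, c) s *
        mreal μ (blockEvent X Y Z 0 j pa pb pc ∩ blockEvent X Y Z j k a b c)

/-- Assumption 3: `Y_{k+1}` is conditionally independent of the past `(Y₋∞⁰, Z₋∞⁰)` given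
`(Y₁ᵏ, Z₁ᵏ⁺¹)` (stated at every time shift `j`, which by stationarity is the one-sided
form of the two-sided statement). -/
def CondIndepPast (μ : MeasureTheory.Measure Ω) (X Y Z : ℕ → Ω → 𝒳) (k : ℕ) : Prop :=
  ∀ (j : ℕ) (py pz : Blk 𝒳 j) (b : Blk 𝒳 k) (c : Blk 𝒳 (k+1)) (y : 𝒳),
    mreal μ ({ω | Y (j + k) ω = y} ∩
        {ω | (∀ i : Fin k, Y (j + i) ω = b i) ∧ (∀ i : Fin (k+1), Z (j + i) ω = c i)} ∩
        {ω | ∀ i : Fin j, Y i ω = py i ∧ Z i ω = pz i}) *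
      mreal μ {ω | (∀ i : Fin k, Y (j + i) ω = b i) ∧ (∀ i : Fin (k+1), Z (j + i) ω = c i)}
    = mreal μ ({ω | Y (j + k) ω = y} ∩
        {ω | (∀ i : Fin k, Y (j + i) ω = b i) ∧ (∀ i : Fin (k+1), Z (j + i) ω = c i)}) *
      mreal μ ({ω | (∀ i : Fin k, Y (j + i) ω = b i) ∧ (∀ i : Fin (k+1), Z (j + i) ω = c i)} ∩
        {ω | ∀ i : Fin j, Y i ω = py i ∧ Z i ω = pz i})

/-- Measurability of the elementary events of the process. -/
def MeasProc (X Y Z : ℕ → Ω → 𝒳) : Prop :=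
  ∀ (i : ℕ) (x : 𝒳), MeasurableSet {ω | X i ω = x} ∧ MeasurableSet {ω | Y i ω = x} ∧
    MeasurableSet {ω | Z i ω = x}

/-! ### Empirical distribution, plug-in directed information, log-likelihoods -/

/-- Empirical distribution of `(k+1)`-blocks of three sample sequences of length `n`. -/
noncomputable def empDistSeq (x y z : ℕ → 𝒳) (k n : ℕ) (a b c : Blk 𝒳 (k+1)) : ℝ :=
  ((n - k : ℕ) : ℝ)⁻¹ * ∑ t ∈ Finset.range (n - k),
    if ∀ i : Fin (k+1), x (t + i) = a i ∧ y (t + i) = b i ∧ z (t + i) = c i then 1 else 0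

/-- Empirical distribution of `(k+1)`-blocks of the three processes (random). -/
noncomputable def empDist (X Y Z : ℕ → Ω → 𝒳) (k n : ℕ) (a b c : Blk 𝒳 (k+1)) (ω : Ω) : ℝ :=
  empDistSeq (fun i => X i ω) (fun i => Y i ω) (fun i => Z i ω) k n a b c

/-- The stationary `(k+1)`-block distribution `P̄`. -/
noncomputable def statDist (μ : MeasureTheory.Measure Ω) (X Y Z : ℕ → Ω → 𝒳) (k : ℕ)
    (a b c : Blk 𝒳 (k+1)) : ℝ :=
  mreal μ (blockEvent X Y Z 0 (k+1) a b c)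

/-- Plug-in estimator of the directed information:
`Î_n^{(k)}(X→Y‖Z) = I(Ŷ_{k+1}; X̂₁ᵏ⁺¹ | Ŷ₁ᵏ, Ẑ₁ᵏ⁺¹)` under the empirical distribution. -/
noncomputable def empMI (X Y Z : ℕ → Ω → 𝒳) (k n : ℕ) (ω : Ω) : ℝ :=
  condMI (fun a b c => empDist X Y Z k n a b c ω)

/-- Log-likelihood (extended-real valued) of the samples under transition matrix `Q`. -/
noncomputable def loglikSeq {k : ℕ} (Q : Hist 𝒳 k → Sym 𝒳 → ℝ) (x y z : ℕ → 𝒳) (n : ℕ) :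
    EReal :=
  ∑ i ∈ Finset.Ico k n,
    elog (Q (fun j : Fin k => x (i - k + j), fun j : Fin k => y (i - k + j),
      fun j : Fin k => z (i - k + j)) (x i, y i, z i))

/-- Log-likelihood of the process samples under transition matrix `Q`. -/
noncomputable def loglik {k : ℕ} (Q : Hist 𝒳 k → Sym 𝒳 → ℝ) (X Y Z : ℕ → Ω → 𝒳) (n : ℕ)
    (ω : Ω) : EReal :=
  loglikSeq Q (fun i => X i ω) (fun i => Y i ω) (fun i => Z i ω) n

/-- The Neyman–Pearson log-likelihood ratio `Λ_{xy,n}`: the maximal log-likelihood over all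
transition matrices minus the maximal log-likelihood over the factorized (null-hypothesis)
transition matrices. -/
noncomputable def Lambda (X Y Z : ℕ → Ω → 𝒳) (k n : ℕ) (ω : Ω) : EReal :=
  sSup {L : EReal | ∃ Q : Hist 𝒳 k → Sym 𝒳 → ℝ, IsTransMat Q ∧ L = loglik Q X Y Z n ω} -
  sSup {L : EReal | ∃ Q : Hist 𝒳 k → Sym 𝒳 → ℝ, IsTransMat Q ∧ IsFactorized Q ∧
    L = loglik Q X Y Z n ω}

/-! ### Chi-squared distribution and convergence in distribution -/

/-- The chi-squared distribution with `f` degrees of freedom: the Gamma distribution with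
shape `f/2` and rate `1/2`. -/
noncomputable def chiSq (f : ℝ) : MeasureTheory.Measure ℝ :=
  ProbabilityTheory.gammaMeasure (f / 2) (1 / 2)

/-- `W n` converges in distribution (weakly) to `ν` as `n → ∞`. -/
def TendstoInDist (μ : MeasureTheory.Measure Ω) (W : ℕ → Ω → ℝ)
    (ν : MeasureTheory.Measure ℝ) : Prop :=
  ∀ f : BoundedContinuousFunction ℝ ℝ,
    Tendsto (fun n => ∫ ω, f (W n ω) ∂μ) atTop (𝓝 (∫ x, f x ∂ν))

/-- Conditional mutual information `I(U; V | W)` of finitely-valued random variables. -/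
noncomputable def cmiRV {A B C : Type*} [Fintype A] [Fintype B] [Fintype C]
    [DecidableEq A] [DecidableEq B] [DecidableEq C]
    (μ : MeasureTheory.Measure Ω) (U : Ω → A) (V : Ω → B) (W : Ω → C) : ℝ :=
  ∑ a : A, ∑ b : B, ∑ c : C,
    mreal μ {ω | U ω = a ∧ V ω = b ∧ W ω = c} *
      Real.log ((mreal μ {ω | U ω = a ∧ V ω = b ∧ W ω = c} * mreal μ {ω | W ω = c}) /
        (mreal μ {ω | U ω = a ∧ W ω = c} * mreal μ {ω | V ω = b ∧ W ω = c}))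

end DIG

namespace DIG

variable {𝒳 : Type*} [Fintype 𝒳] [DecidableEq 𝒳] [Nonempty 𝒳]
variable {Ω : Type*} [MeasurableSpace Ω]

/-- A joint configuration of `L`-blocks of the `m` nodes. -/
abbrev MBlk (𝒳 : Type*) (m L : ℕ) := Fin m → Blk 𝒳 L

/-- A joint symbol of the `m` nodes. -/
abbrev MSym (𝒳 : Type*) (m : ℕ) := Fin m → 𝒳

/-- The event that the `L`-blocks of all `m` processes starting at time `t` equal `w`. -/
def mblockEvent {m : ℕ} (X : Fin m → ℕ → Ω → 𝒳) (t L : ℕ) (w : MBlk 𝒳 m L) : Set Ω :=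
  {ω | ∀ (l : Fin m) (i : Fin L), X l (t + i) ω = w l i}

/-- Joint stationarity of the `m` processes. -/
def MStationary {m : ℕ} (μ : MeasureTheory.Measure Ω) (X : Fin m → ℕ → Ω → 𝒳) : Prop :=
  ∀ (t L : ℕ) (w : MBlk 𝒳 m L), μ (mblockEvent X t L w) = μ (mblockEvent X 0 L w)

/-- `Q` is a transition probability matrix for the `m`-node process. -/
def MIsTransMat {m k : ℕ} (Q : MBlk 𝒳 m k → MSym 𝒳 m → ℝ) : Prop :=
  (∀ h s, 0 ≤ Q h s) ∧ (∀ h, ∑ s : MSym 𝒳 m, Q h s = 1)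

/-- The `m`-node process is jointly Markov of order `k` with transition matrix `Q`. -/
def MMarkovOfOrder {m : ℕ} (μ : MeasureTheory.Measure Ω) (X : Fin m → ℕ → Ω → 𝒳) (k : ℕ)
    (Q : MBlk 𝒳 m k → MSym 𝒳 m → ℝ) : Prop :=
  ∀ (j : ℕ) (pw : MBlk 𝒳 m j) (w : MBlk 𝒳 m k) (s : MSym 𝒳 m),
    mreal μ (mblockEvent X 0 j pw ∩ mblockEvent X j k w ∩ {ω | ∀ l, X l (j + k) ω = s l})
      = Q w s * mreal μ (mblockEvent X 0 j pw ∩ mblockEvent X j k w)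

/-- Assumption 3 for every ordered pair `(i,j)`: `X̄_{j,k+1}` is conditionally independent
of the past of `(X_j, X_{[m]∖{i,j}})` given `(X̄_{j,1}ᵏ, X̄_{[m]∖{i,j},1}ᵏ⁺¹)`. -/
def MCondIndepPast {m : ℕ} (μ : MeasureTheory.Measure Ω) (X : Fin m → ℕ → Ω → 𝒳)
    (k : ℕ) : Prop :=
  ∀ (i j : Fin m), i ≠ j →
    ∀ (t : ℕ) (p : Fin m → Blk 𝒳 t) (b : Blk 𝒳 k) (c : Fin m → Blk 𝒳 (k+1)) (y : 𝒳),
      mreal μ ({ω | X j (t + k) ω = y} ∩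
          {ω | (∀ i' : Fin k, X j (t + i') ω = b i') ∧
            ∀ l, l ≠ i → l ≠ j → ∀ i' : Fin (k+1), X l (t + i') ω = c l i'} ∩
          {ω | (∀ i' : Fin t, X j i' ω = p j i') ∧
            ∀ l, l ≠ i → l ≠ j → ∀ i' : Fin t, X l i' ω = p l i'}) *
        mreal μ {ω | (∀ i' : Fin k, X j (t + i') ω = b i') ∧
            ∀ l, l ≠ i → l ≠ j → ∀ i' : Fin (k+1), X l (t + i') ω = c l i'}
      = mreal μ ({ω | X j (t + k) ω = y} ∩
          {ω | (∀ i' : Fin k, X j (t + i') ω = b i') ∧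
            ∀ l, l ≠ i → l ≠ j → ∀ i' : Fin (k+1), X l (t + i') ω = c l i'}) *
        mreal μ ({ω | (∀ i' : Fin k, X j (t + i') ω = b i') ∧
            ∀ l, l ≠ i → l ≠ j → ∀ i' : Fin (k+1), X l (t + i') ω = c l i'} ∩
          {ω | (∀ i' : Fin t, X j i' ω = p j i') ∧
            ∀ l, l ≠ i → l ≠ j → ∀ i' : Fin t, X l i' ω = p l i'})

/-- Absence of the edge `i → j` (`v_ij = 0`): the transition matrix factorizes as
`Q = g1 · g2`, where `g1` does not depend on the next symbol of node `j`, and `g2`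
depends only on the history of node `j`, on its next symbol, and on the histories and
next symbols of the nodes other than `i` and `j`. -/
def MIsFactorizedAt {m k : ℕ} (Q : MBlk 𝒳 m k → MSym 𝒳 m → ℝ) (i j : Fin m) : Prop :=
  ∃ g1 g2 : MBlk 𝒳 m k → MSym 𝒳 m → ℝ,
    (∀ h s s', (∀ l, l ≠ j → s l = s' l) → g1 h s = g1 h s') ∧
    (∀ h h' s s', h j = h' j → s j = s' j →
      (∀ l, l ≠ i → l ≠ j → h l = h' l ∧ s l = s' l) → g2 h s = g2 h' s') ∧
    (∀ h s, Q h s = g1 h s * g2 h s)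

/-- Empirical distribution of the `(k+1)`-block configurations from `n` samples. -/
noncomputable def mEmpDist {m : ℕ} (X : Fin m → ℕ → Ω → 𝒳) (k n : ℕ)
    (w : MBlk 𝒳 m (k+1)) (ω : Ω) : ℝ :=
  ((n - k : ℕ) : ℝ)⁻¹ * ∑ t ∈ Finset.range (n - k),
    if ∀ (l : Fin m) (i : Fin (k+1)), X l (t + i) ω = w l i then 1 else 0

/-- Marginal of `(X_{j,1}ᵏ, X_{[m]∖{i,j},1}ᵏ⁺¹)` (as a function of a full configuration). -/
noncomputable def mMargA {m k : ℕ} (p : MBlk 𝒳 m (k+1) → ℝ) (i j : Fin m)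
    (w : MBlk 𝒳 m (k+1)) : ℝ :=
  ∑ w' : MBlk 𝒳 m (k+1),
    if Fin.init (w' j) = Fin.init (w j) ∧ ∀ l, l ≠ i → l ≠ j → w' l = w l then p w' else 0

/-- Marginal of `(X_{j,1}ᵏ⁺¹, X_{[m]∖{i,j},1}ᵏ⁺¹)`. -/
noncomputable def mMargB {m k : ℕ} (p : MBlk 𝒳 m (k+1) → ℝ) (i j : Fin m)
    (w : MBlk 𝒳 m (k+1)) : ℝ :=
  ∑ w' : MBlk 𝒳 m (k+1),
    if w' j = w j ∧ ∀ l, l ≠ i → l ≠ j → w' l = w l then p w' else 0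

/-- Marginal of `(X_{i,1}ᵏ⁺¹, X_{j,1}ᵏ, X_{[m]∖{i,j},1}ᵏ⁺¹)`. -/
noncomputable def mMargC {m k : ℕ} (p : MBlk 𝒳 m (k+1) → ℝ) (i j : Fin m)
    (w : MBlk 𝒳 m (k+1)) : ℝ :=
  ∑ w' : MBlk 𝒳 m (k+1),
    if w' i = w i ∧ Fin.init (w' j) = Fin.init (w j) ∧ ∀ l, l ≠ i → l ≠ j → w' l = w l
      then p w' else 0

/-- Conditional mutual information
`I(X_{j,k+1}; X_{i,1}ᵏ⁺¹ | X_{j,1}ᵏ, X_{[m]∖{i,j},1}ᵏ⁺¹)` under the joint pmf `p` of the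
`(k+1)`-block configurations. -/
noncomputable def mCondMI {m k : ℕ} (p : MBlk 𝒳 m (k+1) → ℝ) (i j : Fin m) : ℝ :=
  ∑ w : MBlk 𝒳 m (k+1),
    p w * Real.log ((p w * mMargA p i j w) / (mMargB p i j w * mMargC p i j w))

/-- The estimated adjacency matrix: `v̂_ij = 1` iff
`(n−k)·Î_n^{(k)}(X_i→X_j‖X_{[m]∖{i,j}}) ≥ I_th` (off the diagonal). -/
noncomputable def estAdj {m : ℕ} (X : Fin m → ℕ → Ω → 𝒳) (k n : ℕ) (Ith : ℝ) (ω : Ω)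
    (i j : Fin m) : Bool :=
  if i = j then false
  else if Ith ≤ ((n - k : ℕ) : ℝ) * mCondMI (fun w => mEmpDist X k n w ω) i j then true
  else false

end DIG

open MeasureTheory Filter Finset
open scoped BigOperators Topology ENNReal NNReal Classical
namespace DIG

section gaussNorm
open ProbabilityTheory
variable {E : Type*} [NormedAddCommGroup E] [InnerProductSpace ℝ E] [FiniteDimensional ℝ E]
  [MeasurableSpace E] [BorelSpace E]

lemma gauss_int (t : E) :
    ∫ x : E, Complex.exp ((inner ℝ x t : ℝ) * Complex.I) * (Real.exp (-‖x‖ ^ 2 / 2) : ℝ) =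
      (∫ x : E, ((Real.exp (-‖x‖ ^ 2 / 2) : ℝ) : ℂ)) * Complex.exp (-(‖t‖ : ℂ) ^ 2 / 2) := by
  have h1 := GaussianFourier.integral_cexp_neg_mul_sq_norm_add (V := E) (b := 1 / 2)
    (by norm_num) Complex.I t
  have h0 := GaussianFourier.integral_cexp_neg_mul_sq_norm_add (V := E) (b := 1 / 2)
    (by norm_num) 0 (0 : E)
  have e1 : ∀ x : E, Complex.exp ((inner ℝ x t : ℝ) * Complex.I) *
      ((Real.exp (-‖x‖ ^ 2 / 2) : ℝ) : ℂ) =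
      Complex.exp (-(1 / 2) * (‖x‖ : ℂ) ^ 2 + Complex.I * (inner ℝ t x : ℝ)) := by
    intro x
    rw [Complex.ofReal_exp, ← Complex.exp_add, real_inner_comm]
    congr 1; push_cast; ring
  have e0 : ∀ x : E, ((Real.exp (-‖x‖ ^ 2 / 2) : ℝ) : ℂ) =
      Complex.exp (-(1 / 2) * (‖x‖ : ℂ) ^ 2 + 0 * (inner ℝ (0 : E) x : ℝ)) := by
    intro x
    rw [Complex.ofReal_exp]
    congr 1; push_cast; ring
  simp_rw [e1, e0]
  rw [h1, h0]
  have z0 : Complex.exp (0 ^ 2 * (‖(0 : E)‖ : ℂ) ^ 2 / (4 * (1 / 2))) = 1 := by simp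
  rw [z0, mul_one]
  congr 2
  rw [Complex.I_sq]; ring

lemma gauss_integrable : Integrable (fun x : E => Real.exp (-‖x‖ ^ 2 / 2)) := by
  have h := (GaussianFourier.integrable_cexp_neg_mul_sq_norm_add (V := E) (b := 1 / 2)
    (by norm_num) 0 (0 : E)).re
  refine h.congr (ae_of_all _ fun x => ?_)
  have : (-(1 / 2) * (‖x‖ : ℂ) ^ 2 + 0 * (inner ℝ (0 : E) x : ℝ)) =
    ((-‖x‖ ^ 2 / 2 : ℝ) : ℂ) := by push_cast; ring
  simp only [this]
  rw [← Complex.ofReal_exp]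
  exact RCLike.ofReal_re _

lemma gauss_const_pos : 0 < ∫ x : E, Real.exp (-‖x‖ ^ 2 / 2) := by
  exact integral_exp_pos gauss_integrable

noncomputable def gdens (x : E) : ℝ≥0 :=
  Real.toNNReal ((∫ x : E, Real.exp (-‖x‖ ^ 2 / 2))⁻¹ * Real.exp (-‖x‖ ^ 2 / 2))

lemma gdens_coe (x : E) : ((gdens x : ℝ≥0) : ℝ) =
    (∫ x : E, Real.exp (-‖x‖ ^ 2 / 2))⁻¹ * Real.exp (-‖x‖ ^ 2 / 2) := by
  rw [gdens, Real.coe_toNNReal]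
  have := gauss_const_pos (E := E)
  positivity

lemma gdens_meas : Measurable (gdens (E := E)) := by
  unfold gdens
  fun_prop

lemma stdG_eq : stdGaussian E = volume.withDensity (fun x : E => ((gdens x : ℝ≥0) : ℝ≥0∞)) := by
  have hc := gauss_const_pos (E := E)
  have : IsFiniteMeasure (volume.withDensity (fun x : E => ((gdens x : ℝ≥0) : ℝ≥0∞))) := by
    refine isFiniteMeasure_withDensity_ofReal (f := fun x : E => _) ?_
    exact (gauss_integrable.const_mul _).2
  apply Measure.ext_of_charFun
  ext t
  rw [charFun_stdGaussian, charFun_apply, integral_withDensity_eq_integral_smul gdens_meas]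
  have : ∀ x : E, gdens x • Complex.exp ((inner ℝ x t : ℝ) * Complex.I) =
      ((∫ x : E, Real.exp (-‖x‖ ^ 2 / 2))⁻¹ : ℝ) *
      (Complex.exp ((inner ℝ x t : ℝ) * Complex.I) * (Real.exp (-‖x‖ ^ 2 / 2) : ℝ)) := by
    intro x
    rw [NNReal.smul_def, gdens_coe, Complex.real_smul]
    push_cast; ring
  simp_rw [this]
  rw [integral_const_mul, gauss_int, integral_complex_ofReal, ← mul_assoc, ← Complex.ofReal_mul,
    inv_mul_cancel₀ hc.ne']
  simp

lemma stdG_real (hE : 0 < Module.finrank ℝ E) : ∃ K : ℝ, ∀ A : Set ℝ, MeasurableSet A →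
    (stdGaussian E).real {x | ‖x‖ ^ 2 ∈ A} =
      K * ∫ y in Set.Ioi (0:ℝ), A.indicator
        (fun y => y ^ ((Module.finrank ℝ E : ℝ) / 2 - 1) * Real.exp (-(1 / 2 * y))) y := by
  set d := Module.finrank ℝ E with hd
  have : Nontrivial E := Module.nontrivial_of_finrank_pos hE
  refine ⟨(∫ x : E, Real.exp (-‖x‖ ^ 2 / 2))⁻¹ * (d * (volume : Measure E).real
    (Metric.ball 0 1)) * (1 / 2), fun A hA => ?_⟩
  have hm : MeasurableSet {x : E | ‖x‖ ^ 2 ∈ A} :=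
    (by fun_prop : Measurable fun x : E => ‖x‖ ^ 2) hA
  rw [← integral_indicator_one hm, stdG_eq, integral_withDensity_eq_integral_smul gdens_meas]
  have e1 : ∀ x : E, gdens x • ({x : E | ‖x‖ ^ 2 ∈ A}.indicator (1 : E → ℝ) x) =
      (fun r : ℝ => (∫ x : E, Real.exp (-‖x‖ ^ 2 / 2))⁻¹ *
        (A.indicator (fun y => Real.exp (-(1 / 2 * y))) (r ^ 2))) ‖x‖ := by
    intro x
    rw [NNReal.smul_def, gdens_coe]
    by_cases h : ‖x‖ ^ 2 ∈ A
    · simp [Set.indicator_of_mem, h]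
      left; ring
    · simp [h]
  simp_rw [e1]
  rw [integral_fun_norm_addHaar volume (fun r : ℝ => (∫ x : E, Real.exp (-‖x‖ ^ 2 / 2))⁻¹ *
        (A.indicator (fun y => Real.exp (-(1 / 2 * y))) (r ^ 2))), ← hd]
  rw [← integral_comp_rpow_Ioi_of_pos (g := A.indicator
        (fun y => y ^ ((d : ℝ) / 2 - 1) * Real.exp (-(1 / 2 * y)))) (p := 2) (by norm_num)]
  simp only [smul_eq_mul, nsmul_eq_mul]
  rw [← integral_const_mul, ← integral_const_mul, ← integral_const_mul]
  refine setIntegral_congr_fun measurableSet_Ioi fun y hy => ?_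
  have hy : 0 < y := hy
  simp only [Real.rpow_two]
  by_cases h : y ^ 2 ∈ A
  · simp only [h, Set.indicator_of_mem]
    have : y ^ (d - 1) = y * (y ^ 2) ^ ((d : ℝ) / 2 - 1) := by
      rw [← Real.rpow_natCast, ← Real.rpow_two, ← Real.rpow_mul hy.le]
      nth_rewrite 2 [← Real.rpow_one y]
      rw [← Real.rpow_add hy]
      congr 1
      rw [Nat.cast_sub (by omega)]
      push_cast; ring
    rw [this]
    have : (2 - 1 : ℝ) = 1 := by norm_num
    rw [this, Real.rpow_one]
    ring
  · simp [h]

lemma gamma_real (d : ℝ) (hd : 0 < d) : ∃ K : ℝ, ∀ A : Set ℝ, MeasurableSet A →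
    (gammaMeasure (d / 2) (1 / 2)).real A =
      K * ∫ y in Set.Ioi (0:ℝ), A.indicator
        (fun y => y ^ (d / 2 - 1) * Real.exp (-(1 / 2 * y))) y := by
  refine ⟨(1 / 2) ^ (d / 2) / Real.Gamma (d / 2), fun A hA => ?_⟩
  rw [← integral_indicator_one hA, gammaMeasure]
  have hm : Measurable fun x => (gammaPDFReal (d / 2) (1 / 2) x).toNNReal := by fun_prop
  rw [show gammaPDF (d / 2) (1 / 2) = fun x => (((gammaPDFReal (d / 2) (1 / 2) x).toNNReal : ℝ≥0) : ℝ≥0∞) from rfl,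
   integral_withDensity_eq_integral_smul hm, ← integral_const_mul]
  rw [← integral_Ici_eq_integral_Ioi, ← integral_indicator measurableSet_Ici]
  congr 1
  ext x
  rw [NNReal.smul_def, Real.coe_toNNReal _ (gammaPDFReal_nonneg (by positivity) (by norm_num) _)]
  by_cases h0 : 0 ≤ x <;> by_cases h : x ∈ A <;> simp [h, h0, gammaPDFReal]
  ring

lemma stdG_ball (hE : 0 < Module.finrank ℝ E) (I : ℝ) :
    (stdGaussian E).real {x | ‖x‖ ^ 2 < I} =
      (gammaMeasure ((Module.finrank ℝ E : ℝ) / 2) (1 / 2)).real (Set.Iic I) := by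
  have hd : (0 : ℝ) < Module.finrank ℝ E := by exact_mod_cast hE
  obtain ⟨K, hK⟩ := stdG_real hE
  obtain ⟨K', hK'⟩ := gamma_real _ hd
  have := isProbabilityMeasure_gammaMeasure (a := (Module.finrank ℝ E : ℝ) / 2)
    (by positivity) (show (0:ℝ) < 1 / 2 by norm_num)
  have u := hK Set.univ MeasurableSet.univ
  have u' := hK' Set.univ MeasurableSet.univ
  simp only [Set.mem_univ, Set.ofPred_true, probReal_univ] at u u'
  have hKK : K = K' := by
    have := u.symm.trans u'
    refine mul_right_cancel₀ ?_ this
    intro h; rw [h] at u; simp at u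
  have a := hK (Set.Iio I) measurableSet_Iio
  have b := hK' (Set.Iio I) measurableSet_Iio
  simp only [Set.mem_Iio] at a
  rw [a, hKK, ← b]
  have : (gammaMeasure ((Module.finrank ℝ E : ℝ) / 2) (1 / 2)) ≪ volume := 
    withDensity_absolutelyContinuous _ _
  have := this.ae_eq (Iio_ae_eq_Iic (a := I) (μ := volume))
  exact measureReal_congr this
end gaussNorm
end DIG

open MeasureTheory Filter Finset
open scoped BigOperators Topology ENNReal NNReal Classical
namespace DIG

section chain
set_option linter.unusedSectionVars false

lemma integral_finval {Ω T 𝕜 : Type*} [MeasurableSpace Ω] (μ : Measure Ω) [IsProbabilityMeasure μ]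
    [RCLike 𝕜] [Fintype T]
    (τ : Ω → T) (hτ : ∀ x, MeasurableSet {ω | τ ω = x}) (g : T → 𝕜) :
    Integrable (fun ω => g (τ ω)) μ ∧
    ∫ ω, g (τ ω) ∂μ = ∑ x, (μ.real {ω | τ ω = x} : 𝕜) * g x := by
  have e : (fun ω => g (τ ω)) = fun ω => ∑ x, {ω | τ ω = x}.indicator (fun _ => g x) ω := by
    ext ω
    rw [Finset.sum_eq_single (τ ω)]
    · simp
    · intro b _ hb
      simp [Ne.symm hb]
    · simp
  have hi : ∀ x, Integrable ({ω | τ ω = x}.indicator (fun _ => g x)) μ := fun x =>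
    (integrable_const _).indicator (hτ x)
  constructor
  · rw [e]
    exact integrable_finsetSum _ fun x _ => hi x
  · rw [e, integral_finsetSum _ fun x _ => hi x]
    refine Finset.sum_congr rfl fun x _ => ?_
    rw [integral_indicator_const _ (hτ x), RCLike.real_smul_eq_coe_mul]

variable {Ω : Type*} [MeasurableSpace Ω] {H S : Type*} [Fintype H] [Fintype S]

/-- the past of the chain agrees -/
def SamePast (Hs : ℕ → Ω → H) (Ss : ℕ → Ω → S) (t : ℕ) (ω ω' : Ω) : Prop :=
  Hs 0 ω = Hs 0 ω' ∧ ∀ u < t, Ss u ω = Ss u ω'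

structure Chain (μ : Measure Ω) (Q : H → S → ℝ) (π : H → ℝ) (step : H → S → H)
    (Hs : ℕ → Ω → H) (Ss : ℕ → Ω → S) : Prop where
  qpos : ∀ h s, 0 < Q h s
  qsum : ∀ h, ∑ s, Q h s = 1
  ppos : ∀ h, 0 < π h
  psum : ∑ h, π h = 1
  inv : ∀ f : H → ℝ, ∑ h, π h * ∑ s, Q h s * f (step h s) = ∑ h, π h * f h
  reach : ∀ A : Set H, A.Nonempty → (∀ h ∈ A, ∀ s, step h s ∈ A) → ∀ h, h ∈ A
  step_eq : ∀ t ω, Hs (t + 1) ω = step (Hs t ω) (Ss t ω)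
  measH : ∀ h, MeasurableSet {ω | Hs 0 ω = h}
  measS : ∀ t s, MeasurableSet {ω | Ss t ω = s}
  markov : ∀ t ω₀ s, μ.real {ω | SamePast Hs Ss t ω ω₀ ∧ Ss t ω = s} =
    Q (Hs t ω₀) s * μ.real {ω | SamePast Hs Ss t ω ω₀}

/-- F is a function of the past -/
def Adp {β : Type*} (Hs : ℕ → Ω → H) (Ss : ℕ → Ω → S) (t : ℕ) (F : Ω → β) : Prop :=
  ∀ ω ω', SamePast Hs Ss t ω ω' → F ω = F ω'

namespace Chain
variable {μ : Measure Ω} [IsProbabilityMeasure μ] {Q : H → S → ℝ} {π : H → ℝ} {step : H → S → H}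
    {Hs : ℕ → Ω → H} {Ss : ℕ → Ω → S}

lemma adp_H (hc : Chain μ Q π step Hs Ss) : ∀ (t u : ℕ), u ≤ t → Adp Hs Ss t (Hs u) := by
  intro t u
  induction u with
  | zero => intro _ ω ω' h; exact h.1
  | succ u ih =>
    intro hu ω ω' h
    rw [hc.step_eq, hc.step_eq, ih (by omega) ω ω' h, h.2 u (by omega)]

lemma adp_S (t u : ℕ) (hu : u < t) : Adp Hs Ss t (Ss u) := fun _ _ h => h.2 u hu

/-- the past map -/
def tau (Hs : ℕ → Ω → H) (Ss : ℕ → Ω → S) (t : ℕ) (ω : Ω) : H × (Fin t → S) :=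
  (Hs 0 ω, fun u => Ss u ω)

lemma tau_eq_iff (t : ℕ) (ω ω' : Ω) : tau Hs Ss t ω = tau Hs Ss t ω' ↔ SamePast Hs Ss t ω ω' := by
  simp only [tau, SamePast, Prod.mk.injEq, funext_iff]
  exact and_congr_right fun _ => ⟨fun h u hu => h ⟨u, hu⟩, fun h u => h u u.2⟩

lemma adp_factor {β : Type*} [Nonempty β] {t : ℕ} {F : Ω → β} (hF : Adp Hs Ss t F) :
    ∃ G : H × (Fin t → S) → β, ∀ ω, F ω = G (tau Hs Ss t ω) := by
  have : Function.FactorsThrough F (tau Hs Ss t) := fun ω ω' h => hF _ _ ((tau_eq_iff t ω ω').1 h)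
  obtain ⟨G, hG⟩ := (Function.factorsThrough_iff F).1 this
  exact ⟨G, fun ω => congrFun hG ω⟩

lemma meas_tau (hc : Chain μ Q π step Hs Ss) (t : ℕ) (x : H × (Fin t → S)) :
    MeasurableSet {ω | tau Hs Ss t ω = x} := by
  have : {ω | tau Hs Ss t ω = x} = {ω | Hs 0 ω = x.1} ∩ ⋂ u : Fin t, {ω | Ss u ω = x.2 u} := by
    ext ω
    simp [tau, Prod.ext_iff, funext_iff]
  rw [this]
  exact (hc.measH _).inter (MeasurableSet.iInter fun u => hc.measS _ _)

lemma integrable {𝕜 : Type*} [RCLike 𝕜] (hc : Chain μ Q π step Hs Ss) {t : ℕ} {F : Ω → 𝕜}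
    (hF : Adp Hs Ss t F) : Integrable F μ := by
  obtain ⟨G, hG⟩ := adp_factor hF
  rw [funext hG]
  exact (integral_finval μ _ (hc.meas_tau t) G).1

lemma key {𝕜 : Type*} [RCLike 𝕜] (hc : Chain μ Q π step Hs Ss) {t : ℕ} {F : Ω → 𝕜}
    (hF : Adp Hs Ss t F) (φ : H → S → 𝕜) :
    ∫ ω, F ω * φ (Hs t ω) (Ss t ω) ∂μ = ∫ ω, F ω * ∑ s, (Q (Hs t ω) s : 𝕜) * φ (Hs t ω) s ∂μ := by
  obtain ⟨G, hG⟩ := adp_factor hF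
  by_cases hΩ : Nonempty Ω
  swap
  · rw [not_nonempty_iff] at hΩ
    simp [integral_of_isEmpty]
  have : Nonempty H := hΩ.map (Hs 0)
  obtain ⟨η, hη⟩ := adp_factor (hc.adp_H t t le_rfl)
  have m2 : ∀ x : (H × (Fin t → S)) × S, MeasurableSet {ω | (tau Hs Ss t ω, Ss t ω) = x} := by
    intro x
    have : {ω | (tau Hs Ss t ω, Ss t ω) = x} = {ω | tau Hs Ss t ω = x.1} ∩ {ω | Ss t ω = x.2} := by
      ext ω; simp [Prod.ext_iff]
    rw [this]
    exact (hc.meas_tau t _).inter (hc.measS _ _)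
  have h1 := (integral_finval μ _ m2 (fun x => G x.1 * φ (η x.1) x.2)).2
  have h2 := (integral_finval μ _ (hc.meas_tau t)
    (fun x => G x * ∑ s, (Q (η x) s : 𝕜) * φ (η x) s)).2
  simp only [hG, hη]
  simp only at h1 h2
  rw [h1, h2, Fintype.sum_prod_type]
  refine Finset.sum_congr rfl fun x _ => ?_
  rw [Finset.mul_sum, Finset.mul_sum]
  refine Finset.sum_congr rfl fun s _ => ?_
  have : μ.real {ω | (tau Hs Ss t ω, Ss t ω) = (x, s)} =
      Q (η x) s * μ.real {ω | tau Hs Ss t ω = x} := by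
    by_cases hx : ∃ ω₀, tau Hs Ss t ω₀ = x
    · obtain ⟨ω₀, rfl⟩ := hx
      have := hc.markov t ω₀ s
      simp only [← tau_eq_iff] at this
      rw [hη ω₀] at this
      simpa only [Prod.mk.injEq] using this
    · push Not at hx
      have e1 : {ω | (tau Hs Ss t ω, Ss t ω) = (x, s)} = ∅ := by
        ext ω; simp [hx]
      have e2 : {ω | tau Hs Ss t ω = x} = ∅ := by
        ext ω; simp [hx]
      rw [e1, e2]; simp
  rw [this]
  push_cast
  ring

/-- partial sums -/
noncomputable def psum' (Hs : ℕ → Ω → H) (Ss : ℕ → Ω → S) (ξ : H → S → ℝ) (n : ℕ) (ω : Ω) : ℝ :=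
  ∑ t ∈ range n, ξ (Hs t ω) (Ss t ω)

lemma adp_psum (hc : Chain μ Q π step Hs Ss) (ξ : H → S → ℝ) (n : ℕ) :
    Adp Hs Ss n (psum' Hs Ss ξ n) := by
  intro ω ω' h
  refine Finset.sum_congr rfl fun t ht => ?_
  have ht := Finset.mem_range.1 ht
  rw [hc.adp_H n t ht.le ω ω' h, h.2 t ht]

lemma mart_sq (hc : Chain μ Q π step Hs Ss) (ξ : H → S → ℝ)
    (h0 : ∀ h, ∑ s, Q h s * ξ h s = 0) (C : ℝ) (hC : ∀ h s, ξ h s ^ 2 ≤ C) (n : ℕ) :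
    ∫ ω, (psum' Hs Ss ξ n ω) ^ 2 ∂μ ≤ C * n := by
  induction n with
  | zero => simp [psum']
  | succ n ih =>
    have a0 := hc.adp_psum ξ n
    have e : ∀ ω, psum' Hs Ss ξ (n + 1) ω ^ 2 =
        psum' Hs Ss ξ n ω ^ 2 + 2 * (psum' Hs Ss ξ n ω * ξ (Hs n ω) (Ss n ω))
          + ξ (Hs n ω) (Ss n ω) ^ 2 := by
      intro ω
      simp only [psum', Finset.sum_range_succ]; ring
    have i1 : Integrable (fun ω => psum' Hs Ss ξ n ω ^ 2) μ :=
      hc.integrable (t := n) fun ω ω' h => by simp only [a0 ω ω' h]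
    have i2 : Integrable (fun ω => 2 * (psum' Hs Ss ξ n ω * ξ (Hs n ω) (Ss n ω))) μ := by
      refine hc.integrable (t := n + 1) fun ω ω' h => ?_
      have h' : SamePast Hs Ss n ω ω' := ⟨h.1, fun u hu => h.2 u (by omega)⟩
      simp only [a0 ω ω' h', hc.adp_H (n + 1) n (by omega) ω ω' h, h.2 n (by omega)]
    have i3 : Integrable (fun ω => ξ (Hs n ω) (Ss n ω) ^ 2) μ := by
      refine hc.integrable (t := n + 1) fun ω ω' h => ?_
      simp only [hc.adp_H (n + 1) n (by omega) ω ω' h, h.2 n (by omega)]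
    simp_rw [e]
    have i12 : Integrable (fun ω => psum' Hs Ss ξ n ω ^ 2 +
        2 * (psum' Hs Ss ξ n ω * ξ (Hs n ω) (Ss n ω))) μ := i1.add i2
    rw [integral_add i12 i3, integral_add i1 i2, integral_const_mul, hc.key a0 ξ]
    have : ∫ ω, psum' Hs Ss ξ n ω * ∑ s, ((Q (Hs n ω) s : ℝ) : ℝ) * ξ (Hs n ω) s ∂μ = 0 := by
      simp [h0]
    simp only [RCLike.ofReal_real_eq_id, id_eq] at this ⊢
    rw [this]
    have h3 : ∫ ω, ξ (Hs n ω) (Ss n ω) ^ 2 ∂μ ≤ ∫ ω, C ∂μ :=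
      integral_mono i3 (integrable_const _) fun ω => hC _ _
    simp at h3
    push_cast
    linarith

lemma harmonic_const (hc : Chain μ Q π step Hs Ss) [Nonempty H] (g : H → ℝ)
    (hg : ∀ h, g h = ∑ s, Q h s * g (step h s)) : ∃ c, ∀ h, g h = c := by
  obtain ⟨h₀, hh₀⟩ := Finite.exists_max g
  refine ⟨g h₀, hc.reach {h | g h = g h₀} ⟨h₀, rfl⟩ ?_⟩
  intro h hh s
  by_contra hne
  have hlt : g (step h s) < g h₀ := lt_of_le_of_ne (hh₀ _) hne
  have : ∑ s, Q h s * g (step h s) < ∑ s, Q h s * g h₀ :=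
    Finset.sum_lt_sum (fun s' _ => mul_le_mul_of_nonneg_left (hh₀ _) (hc.qpos _ _).le)
      ⟨s, Finset.mem_univ _, mul_lt_mul_of_pos_left hlt (hc.qpos _ _)⟩
  rw [← hg, ← Finset.sum_mul, hc.qsum, one_mul, show g h = g h₀ from hh] at this
  exact lt_irrefl _ this

lemma poisson (hc : Chain μ Q π step Hs Ss) [Nonempty H] (f : H → ℝ)
    (hf : ∑ h, π h * f h = 0) : ∃ g : H → ℝ, ∀ h, f h = g h - ∑ s, Q h s * g (step h s) := by
  let T : (H → ℝ) →ₗ[ℝ] (H → ℝ) :=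
    { toFun := fun g h => g h - ∑ s, Q h s * g (step h s)
      map_add' := by
        intro a b; ext h
        simp only [Pi.add_apply, mul_add, Finset.sum_add_distrib]; ring
      map_smul' := by
        intro c a; ext h
        simp only [Pi.smul_apply, smul_eq_mul, RingHom.id_apply, mul_sub, Finset.mul_sum]
        congr 1
        exact Finset.sum_congr rfl fun s _ => by ring }
  let P : (H → ℝ) →ₗ[ℝ] ℝ :=
    { toFun := fun g => ∑ h, π h * g h
      map_add' := by intro a b; simp only [Pi.add_apply, mul_add, Finset.sum_add_distrib]
      map_smul' := by
        intro c a
        simp only [Pi.smul_apply, smul_eq_mul, RingHom.id_apply, Finset.mul_sum]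
        exact Finset.sum_congr rfl fun s _ => by ring }
  have hle : LinearMap.range T ≤ LinearMap.ker P := by
    rintro _ ⟨g, rfl⟩
    rw [LinearMap.mem_ker]
    change ∑ h, π h * (g h - ∑ s, Q h s * g (step h s)) = 0
    simp only [mul_sub, Finset.sum_sub_distrib]
    rw [hc.inv]; simp
  have hker : Module.finrank ℝ (LinearMap.ker T) ≤ 1 := by
    refine finrank_le_one (⟨fun _ => 1, ?_⟩ : LinearMap.ker T) ?_
    · rw [LinearMap.mem_ker]; ext h
      change (1 : ℝ) - ∑ s, Q h s * 1 = 0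
      simp [hc.qsum]
    · rintro ⟨g, hg⟩
      rw [LinearMap.mem_ker] at hg
      obtain ⟨c, hcc⟩ := hc.harmonic_const g (fun h => by
        have := congrFun hg h
        change g h - ∑ s, Q h s * g (step h s) = 0 at this
        linarith)
      refine ⟨c, ?_⟩
      ext h
      simp [hcc]
  have r1 := LinearMap.finrank_range_add_finrank_ker T
  have r2 := LinearMap.finrank_range_add_finrank_ker P
  have hP : Function.Surjective P := by
    intro c
    refine ⟨fun _ => c, ?_⟩
    change ∑ h, π h * c = c
    rw [← Finset.sum_mul, hc.psum, one_mul]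
  rw [LinearMap.range_eq_top.2 hP, finrank_top, Module.finrank_self] at r2
  have heq : LinearMap.range T = LinearMap.ker P :=
    Submodule.eq_of_le_of_finrank_le hle (by omega)
  have : f ∈ LinearMap.range T := by
    rw [heq, LinearMap.mem_ker]; exact hf
  obtain ⟨g, hg⟩ := this
  exact ⟨g, fun h => (congrFun hg h).symm⟩

lemma exists_bound (ξ : H → S → ℝ) : ∃ C : ℝ, 0 ≤ C ∧ ∀ h s, |ξ h s| ≤ C := by
  refine ⟨∑ h, ∑ s, |ξ h s|, by positivity, fun h s => ?_⟩
  calc |ξ h s| ≤ ∑ s, |ξ h s| :=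
        Finset.single_le_sum (f := fun s => |ξ h s|) (fun _ _ => abs_nonneg _) (Finset.mem_univ s)
    _ ≤ _ := Finset.single_le_sum (f := fun h => ∑ s, |ξ h s|) (fun _ _ => by positivity)
        (Finset.mem_univ h)

lemma lln (hc : Chain μ Q π step Hs Ss) [Nonempty H] (φ : H → S → ℝ) :
    ∃ K : ℝ, ∀ n : ℕ, ∫ ω, (psum' Hs Ss φ n ω - n * ∑ h, π h * ∑ s, Q h s * φ h s) ^ 2 ∂μ
      ≤ K * (n + 1) := by
  set m := ∑ h, π h * ∑ s, Q h s * φ h s with hm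
  obtain ⟨g, hg⟩ := hc.poisson (fun h => (∑ s, Q h s * φ h s) - m) (by
    simp only [mul_sub, Finset.sum_sub_distrib]
    rw [← Finset.sum_mul, hc.psum, ← hm]; ring)
  set ξ : H → S → ℝ := fun h s => φ h s - m - g h + g (step h s) with hξ
  have h0 : ∀ h, ∑ s, Q h s * ξ h s = 0 := by
    intro h
    have := hg h
    simp only [hξ, mul_add, mul_sub, Finset.sum_add_distrib, Finset.sum_sub_distrib,
      ← Finset.sum_mul, hc.qsum]
    linarith
  obtain ⟨C, hC0, hC⟩ := exists_bound ξ
  obtain ⟨B, hB0, hB⟩ := exists_bound (fun h (_ : Unit) => g h)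
  have hsum : ∀ n ω, psum' Hs Ss φ n ω - n * m =
      psum' Hs Ss ξ n ω + (g (Hs 0 ω) - g (Hs n ω)) := by
    intro n ω
    induction n with
    | zero => simp [psum']
    | succ n ih =>
      have e : g (Hs (n+1) ω) = g (step (Hs n ω) (Ss n ω)) := by rw [hc.step_eq]
      simp only [psum', Finset.sum_range_succ, hξ] at ih ⊢
      push_cast
      linarith
  refine ⟨2 * C ^ 2 + 8 * B ^ 2, fun n => ?_⟩
  have i1 : Integrable (fun ω => psum' Hs Ss ξ n ω ^ 2) μ :=
      hc.integrable (t := n) fun ω ω' h => by simp only [hc.adp_psum ξ n ω ω' h]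
  have hm2 := hc.mart_sq ξ h0 (C ^ 2) (fun h s => sq_le_sq.2 (by rw [abs_of_nonneg hC0]; exact hC h s)) n
  calc ∫ ω, (psum' Hs Ss φ n ω - n * m) ^ 2 ∂μ
      ≤ ∫ ω, (2 * psum' Hs Ss ξ n ω ^ 2 + 8 * B ^ 2) ∂μ := by
        refine integral_mono ?_ ((i1.const_mul 2).add (integrable_const _)) fun ω => ?_
        · refine hc.integrable (t := n) fun ω ω' h => by simp only [hc.adp_psum φ n ω ω' h]
        · simp only [hsum]
          have b1 := abs_le.1 (hB (Hs 0 ω) ())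
          have b2 := abs_le.1 (hB (Hs n ω) ())
          have : (g (Hs 0 ω) - g (Hs n ω)) ^ 2 ≤ (2 * B) ^ 2 := by
            apply sq_le_sq' <;> linarith
          nlinarith [sq_nonneg (psum' Hs Ss ξ n ω - (g (Hs 0 ω) - g (Hs n ω)))]
    _ = 2 * ∫ ω, psum' Hs Ss ξ n ω ^ 2 ∂μ + 8 * B ^ 2 := by
        rw [integral_add (i1.const_mul 2) (integrable_const _), integral_const_mul]
        simp
    _ ≤ _ := by
        have : 0 ≤ (n : ℝ) := by positivity
        nlinarith [sq_nonneg B, sq_nonneg C]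
end Chain
end chain
end DIG

open MeasureTheory Filter Finset
open scoped BigOperators Topology ENNReal NNReal Classical
namespace DIG

section clt
set_option linter.unusedSectionVars false

lemma tendsto_inv_sqrt_nat : Tendsto (fun n : ℕ => (Real.sqrt n)⁻¹) atTop (𝓝 0) :=
  tendsto_inv_atTop_zero.comp (Real.tendsto_sqrt_atTop.comp tendsto_natCast_atTop_atTop)

lemma exp_taylor3 (z : ℂ) (hz : ‖z‖ ≤ 1) : ‖Complex.exp z - 1 - z - z ^ 2 / 2‖ ≤ ‖z‖ ^ 3 := by
  have := Complex.exp_bound hz (n := 3) (by norm_num)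
  simp only [Finset.sum_range_succ, Finset.sum_range_zero, Nat.factorial] at this
  norm_num at this
  calc ‖Complex.exp z - 1 - z - z ^ 2 / 2‖ = ‖Complex.exp z - (1 + z + z ^ 2 / 2)‖ := by
        congr 1; ring
    _ ≤ ‖z‖ ^ 3 * (2 / 9) := this
    _ ≤ ‖z‖ ^ 3 := by nlinarith [pow_nonneg (norm_nonneg z) 3]

/-- exponents -/
noncomputable def wexp (ξ v : ℝ) (n : ℕ) : ℂ :=
  Complex.I * ξ * ((Real.sqrt n)⁻¹ : ℝ) + v / 2 * ((Real.sqrt n)⁻¹ : ℝ) ^ 2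

lemma taylor_step {S : Type*} [Fintype S] (q ξ : S → ℝ) (v : ℝ) (hq : ∀ s, 0 ≤ q s)
    (h1 : ∑ s, q s = 1) (h0 : ∑ s, q s * ξ s = 0) (hv : v = ∑ s, q s * ξ s ^ 2) :
    Tendsto (fun n : ℕ => (n : ℝ) * ‖∑ s, (q s : ℂ) * Complex.exp (wexp (ξ s) v n) - 1‖)
      atTop (𝓝 0) := by
  obtain ⟨A, hA0, hA⟩ : ∃ A : ℝ, 0 ≤ A ∧ ∀ s, |ξ s| + |v| / 2 ≤ A := by
    refine ⟨∑ s, (|ξ s| + |v| / 2), by positivity, fun s =>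
      Finset.single_le_sum (f := fun s => |ξ s| + |v| / 2) (fun _ _ => by positivity)
        (Finset.mem_univ s)⟩
  have hx := tendsto_inv_sqrt_nat
  have hlim : Tendsto (fun n : ℕ => v ^ 2 / 8 * (Real.sqrt n)⁻¹ ^ 2 + A ^ 3 * (Real.sqrt n)⁻¹)
      atTop (𝓝 0) := by
    have := ((hx.pow 2).const_mul (v ^ 2 / 8)).add (hx.const_mul (A ^ 3))
    simpa using this
  refine squeeze_zero' (Eventually.of_forall fun n => by positivity) ?_ hlim
  have ev1 : ∀ᶠ n : ℕ in atTop, A * (Real.sqrt n)⁻¹ < 1 := by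
    have : Tendsto (fun n : ℕ => A * (Real.sqrt n)⁻¹) atTop (𝓝 0) := by
      simpa using hx.const_mul A
    exact this.eventually (gt_mem_nhds one_pos)
  filter_upwards [ev1, eventually_ge_atTop 1] with n hAn hn
  set x := (Real.sqrt n)⁻¹ with hxd
  have hn' : (1 : ℝ) ≤ n := by exact_mod_cast hn
  have hs : 1 ≤ Real.sqrt n := by rw [Real.one_le_sqrt]; exact hn'
  have hx0 : 0 < x := by positivity
  have hx1 : x ≤ 1 := inv_le_one_of_one_le₀ hs
  have hnx : (n : ℝ) * x ^ 2 = 1 := by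
    rw [hxd, inv_pow, Real.sq_sqrt (by positivity)]
    field_simp
  have hz : ∀ s, ‖wexp (ξ s) v n‖ ≤ A * x := by
    intro s
    have : ‖wexp (ξ s) v n‖ ≤ |ξ s| * x + |v| / 2 * x ^ 2 := by
      unfold wexp
      refine (norm_add_le _ _).trans (le_of_eq ?_)
      rw [← hxd]
      simp [abs_of_pos hx0]
    refine this.trans ?_
    have h2 : x ^ 2 ≤ x := by nlinarith
    have := hA s
    have : |v| / 2 * x ^ 2 ≤ |v| / 2 * x := mul_le_mul_of_nonneg_left h2 (by positivity)
    nlinarith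
  have key : ∑ s, (q s : ℂ) * Complex.exp (wexp (ξ s) v n) - 1 =
      (v ^ 2 / 8 * x ^ 4 : ℝ) + ∑ s, (q s : ℂ) * (Complex.exp (wexp (ξ s) v n) - 1 - wexp (ξ s) v n
        - wexp (ξ s) v n ^ 2 / 2) := by
    have c1 : ∑ s, (q s : ℂ) = 1 := by exact_mod_cast h1
    have c0 : ∑ s, (q s : ℂ) * ξ s = 0 := by exact_mod_cast h0
    have cv : ∑ s, (q s : ℂ) * (ξ s : ℂ) ^ 2 = v := by rw [hv]; push_cast; rfl
    have e : ∀ s, (q s : ℂ) * (Complex.exp (wexp (ξ s) v n) - 1 - wexp (ξ s) v n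
        - wexp (ξ s) v n ^ 2 / 2) = (q s : ℂ) * Complex.exp (wexp (ξ s) v n)
          - (1 + v / 2 * x ^ 2 + v ^ 2 / 8 * x ^ 4) * (q s : ℂ)
          - (Complex.I * x + Complex.I * v / 2 * x ^ 3) * ((q s : ℂ) * ξ s)
          + (x ^ 2 / 2) * ((q s : ℂ) * (ξ s : ℂ) ^ 2) := by
      intro s
      have hI : Complex.I ^ 2 = -1 := Complex.I_sq
      have : wexp (ξ s) v n = Complex.I * ξ s * x + v / 2 * x ^ 2 := rfl
      have h2 : (Complex.I * ξ s * x + v / 2 * x ^ 2) ^ 2 =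
        - (ξ s : ℂ) ^ 2 * x ^ 2 + Complex.I * ξ s * v * x ^ 3 + v ^ 2 / 4 * x ^ 4 := by
        linear_combination (ξ s : ℂ) ^ 2 * x ^ 2 * hI
      rw [this, h2]; ring
    simp_rw [e]
    rw [Finset.sum_add_distrib, Finset.sum_sub_distrib, Finset.sum_sub_distrib, ← Finset.mul_sum,
      ← Finset.mul_sum, ← Finset.mul_sum, c1, c0, cv]
    push_cast
    ring
  rw [key]
  have hb : ‖((v ^ 2 / 8 * x ^ 4 : ℝ) : ℂ) + ∑ s, (q s : ℂ) * (Complex.exp (wexp (ξ s) v n) - 1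
      - wexp (ξ s) v n - wexp (ξ s) v n ^ 2 / 2)‖ ≤ v ^ 2 / 8 * x ^ 4 + (A * x) ^ 3 := by
    refine (norm_add_le _ _).trans (add_le_add ?_ ?_)
    · rw [Complex.norm_real, Real.norm_of_nonneg (by positivity)]
    · refine (norm_sum_le _ _).trans ?_
      calc _ ≤ ∑ s, q s * (A * x) ^ 3 := by
            refine Finset.sum_le_sum fun s _ => ?_
            rw [norm_mul, Complex.norm_real, Real.norm_of_nonneg (hq s)]
            refine mul_le_mul_of_nonneg_left ?_ (hq s)
            refine (exp_taylor3 _ ((hz s).trans hAn.le)).trans ?_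
            exact pow_le_pow_left₀ (norm_nonneg _) (hz s) 3
        _ = _ := by rw [← Finset.sum_mul, h1, one_mul]
  calc _ ≤ (n : ℝ) * (v ^ 2 / 8 * x ^ 4 + (A * x) ^ 3) := by gcongr
    _ = (n * x ^ 2) * (v ^ 2 / 8 * x ^ 2 + A ^ 3 * x) := by ring
    _ = _ := by rw [hnx, one_mul]

variable {Ω : Type*} [MeasurableSpace Ω] {H S : Type*} [Fintype H] [Fintype S]
variable {μ : Measure Ω} [IsProbabilityMeasure μ] {Q : H → S → ℝ} {π : H → ℝ} {step : H → S → H}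
    {Hs : ℕ → Ω → H} {Ss : ℕ → Ω → S}

namespace Chain

lemma clt_D (hc : Chain μ Q π step Hs Ss) (ξ : H → S → ℝ) (v : H → ℝ) (C : ℝ)
    (hv0 : ∀ h, 0 ≤ v h) (hvC : ∀ h, v h ≤ C) (n j : ℕ) (hj : j ≤ n) (hn : 1 ≤ n) :
    ‖∫ ω, Complex.exp (∑ t ∈ range j, wexp (ξ (Hs t ω) (Ss t ω)) (v (Hs t ω)) n) ∂μ - 1‖ ≤
      j * (Real.exp (C / 2) *
        ∑ h, ‖∑ s, (Q h s : ℂ) * Complex.exp (wexp (ξ h s) (v h) n) - 1‖) := by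
  induction j with
  | zero => simp
  | succ j ih =>
    have ih := ih (by omega)
    set D : ℕ → Ω → ℂ := fun j ω =>
      Complex.exp (∑ t ∈ range j, wexp (ξ (Hs t ω) (Ss t ω)) (v (Hs t ω)) n) with hD
    have hadp : ∀ j, Adp Hs Ss j (D j) := by
      intro j ω ω' h
      simp only [hD]
      congr 1
      refine Finset.sum_congr rfl fun t ht => ?_
      have ht := Finset.mem_range.1 ht
      rw [hc.adp_H j t ht.le ω ω' h, h.2 t ht]
    have hn' : (1 : ℝ) ≤ n := by exact_mod_cast hn
    have hnorm : ∀ ω, ‖D j ω‖ ≤ Real.exp (C / 2) := by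
      intro ω
      simp only [hD, Complex.norm_exp]
      apply Real.exp_le_exp.2
      rw [Complex.re_sum]
      have : ∀ t ∈ range j, (wexp (ξ (Hs t ω) (Ss t ω)) (v (Hs t ω)) n).re ≤ C / 2 * (n : ℝ)⁻¹ := by
        intro t _
        have : (wexp (ξ (Hs t ω) (Ss t ω)) (v (Hs t ω)) n) =
          (ξ (Hs t ω) (Ss t ω) * (Real.sqrt n)⁻¹ : ℝ) * Complex.I +
            (v (Hs t ω) / 2 * (Real.sqrt n)⁻¹ ^ 2 : ℝ) := by
          unfold wexp; push_cast; ring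
        rw [this, Complex.add_re, Complex.ofReal_re, Complex.re_ofReal_mul, Complex.I_re, inv_pow,
          Real.sq_sqrt (by positivity)]
        have := hvC (Hs t ω)
        have : 0 ≤ (n : ℝ)⁻¹ := by positivity
        nlinarith
      refine (Finset.sum_le_sum this).trans ?_
      rw [Finset.sum_const, card_range, nsmul_eq_mul]
      have hjn : (j : ℝ) * (n : ℝ)⁻¹ ≤ 1 := by
        rw [← div_eq_mul_inv, div_le_one (by positivity)]
        exact_mod_cast (by omega : j ≤ n)
      have hC0 : 0 ≤ C := (hv0 (Hs 0 ω)).trans (hvC _)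
      nlinarith
    have hstep : ∫ ω, D (j + 1) ω ∂μ = ∫ ω, D j ω ∂μ + ∫ ω, D j ω *
        (∑ s, (Q (Hs j ω) s : ℂ) * Complex.exp (wexp (ξ (Hs j ω) s) (v (Hs j ω)) n) - 1) ∂μ := by
      have e : ∀ ω, D (j + 1) ω = D j ω *
          (fun h s => Complex.exp (wexp (ξ h s) (v h) n)) (Hs j ω) (Ss j ω) := by
        intro ω
        simp only [hD, Finset.sum_range_succ, Complex.exp_add]
      simp_rw [e]
      rw [hc.key (hadp j) (fun h s => Complex.exp (wexp (ξ h s) (v h) n)),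
        ← integral_add (hc.integrable (hadp j))]
      · refine integral_congr_ae (ae_of_all _ fun ω => ?_)
        simp only [RCLike.ofReal_eq_complex_ofReal]
        ring
      · refine hc.integrable (t := j) fun ω ω' h => ?_
        simp only [hadp j ω ω' h, hc.adp_H j j le_rfl ω ω' h]
    have hb : ‖∫ ω, D j ω *
        (∑ s, (Q (Hs j ω) s : ℂ) * Complex.exp (wexp (ξ (Hs j ω) s) (v (Hs j ω)) n) - 1) ∂μ‖ ≤
        Real.exp (C / 2) * ∑ h, ‖∑ s, (Q h s : ℂ) * Complex.exp (wexp (ξ h s) (v h) n) - 1‖ := by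
      refine (norm_integral_le_of_norm_le_const (C := Real.exp (C / 2) *
        ∑ h, ‖∑ s, (Q h s : ℂ) * Complex.exp (wexp (ξ h s) (v h) n) - 1‖)
        (ae_of_all _ fun ω => ?_)).trans (by simp)
      rw [norm_mul]
      refine mul_le_mul (hnorm ω) ?_ (norm_nonneg _) (Real.exp_pos _).le
      exact Finset.single_le_sum
        (f := fun h => ‖∑ s, (Q h s : ℂ) * Complex.exp (wexp (ξ h s) (v h) n) - 1‖)
        (fun _ _ => norm_nonneg _) (Finset.mem_univ _)
    change ‖∫ ω, D (j + 1) ω ∂μ - 1‖ ≤ _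
    rw [hstep, add_sub_right_comm]
    refine (norm_add_le _ _).trans ((add_le_add ih hb).trans (le_of_eq ?_))
    push_cast; ring

lemma clt (hc : Chain μ Q π step Hs Ss) [Nonempty H] (ξ : H → S → ℝ)
    (h0 : ∀ h, ∑ s, Q h s * ξ h s = 0) :
    Tendsto (fun n : ℕ => ∫ ω, Complex.exp (Complex.I * (psum' Hs Ss ξ n ω * (Real.sqrt n)⁻¹ : ℝ)) ∂μ)
      atTop (𝓝 (Complex.exp (-(∑ h, π h * ∑ s, Q h s * ξ h s ^ 2 : ℝ) / 2))) := by
  set v : H → ℝ := fun h => ∑ s, Q h s * ξ h s ^ 2 with hv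
  set σ2 : ℝ := ∑ h, π h * ∑ s, Q h s * ξ h s ^ 2 with hσ
  have hv0 : ∀ h, 0 ≤ v h := fun h => Finset.sum_nonneg fun s _ =>
    mul_nonneg (hc.qpos h s).le (sq_nonneg _)
  obtain ⟨C, hC0, hC⟩ := exists_bound (fun h (_ : Unit) => v h)
  have hvC : ∀ h, v h ≤ C := fun h => (le_abs_self _).trans (hC h ())
  have hσC : σ2 ≤ C := by
    calc σ2 ≤ ∑ h, π h * C := Finset.sum_le_sum fun h _ =>
          mul_le_mul_of_nonneg_left (hvC h) (hc.ppos h).le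
      _ = C := by rw [← Finset.sum_mul, hc.psum, one_mul]
  obtain ⟨K, hK⟩ := hc.lln (fun h _ => v h)
  have hmean : ∑ h, π h * ∑ s, Q h s * v h = σ2 := by
    simp_rw [← Finset.sum_mul, hc.qsum, one_mul]; rfl
  rw [hmean] at hK
  set D : ℕ → Ω → ℂ := fun n ω =>
      Complex.exp (∑ t ∈ range n, wexp (ξ (Hs t ω) (Ss t ω)) (v (Hs t ω)) n) with hD
  set Z : ℕ → Ω → ℂ := fun n ω =>
      Complex.exp (Complex.I * (psum' Hs Ss ξ n ω * (Real.sqrt n)⁻¹ : ℝ)) with hZ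
  have hDadp : ∀ n, Adp Hs Ss n (D n) := by
    intro j ω ω' h
    simp only [hD]
    congr 1
    refine Finset.sum_congr rfl fun t ht => ?_
    have ht := Finset.mem_range.1 ht
    rw [hc.adp_H j t ht.le ω ω' h, h.2 t ht]
  have hZadp : ∀ n, Adp Hs Ss n (Z n) := by
    intro j ω ω' h
    simp only [hZ, hc.adp_psum ξ j ω ω' h]
  have t1 : Tendsto (fun n => ∫ ω, D n ω ∂μ) atTop (𝓝 1) := by
    rw [tendsto_iff_norm_sub_tendsto_zero]
    have hlim : Tendsto (fun n : ℕ => Real.exp (C / 2) *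
        ∑ h, (n : ℝ) * ‖∑ s, (Q h s : ℂ) * Complex.exp (wexp (ξ h s) (v h) n) - 1‖) atTop (𝓝 0) := by
      have : Tendsto (fun n : ℕ =>
        ∑ h, (n : ℝ) * ‖∑ s, (Q h s : ℂ) * Complex.exp (wexp (ξ h s) (v h) n) - 1‖) atTop
          (𝓝 (∑ h : H, 0)) := tendsto_finsetSum _ fun h _ =>
        taylor_step (Q h) (ξ h) (v h) (fun s => (hc.qpos h s).le) (hc.qsum h) (h0 h) rfl
      simpa using this.const_mul (Real.exp (C / 2))
    refine squeeze_zero' (Eventually.of_forall fun n => norm_nonneg _) ?_ hlim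
    filter_upwards [eventually_ge_atTop 1] with n hn
    refine (hc.clt_D ξ v C hv0 hvC n n le_rfl hn).trans (le_of_eq ?_)
    rw [← Finset.mul_sum]; ring
  have t2 : Tendsto (fun n => ∫ ω, D n ω ∂μ - Complex.exp ((σ2 / 2 : ℝ)) * ∫ ω, Z n ω ∂μ)
      atTop (𝓝 0) := by
    rw [tendsto_zero_iff_norm_tendsto_zero]
    have hlim : Tendsto (fun n : ℕ => Real.exp (C / 2) * ((1 + |K|) * (Real.sqrt n)⁻¹))
        atTop (𝓝 0) := by
      simpa using (tendsto_inv_sqrt_nat.const_mul (1 + |K|)).const_mul (Real.exp (C / 2))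
    refine squeeze_zero' (Eventually.of_forall fun n => norm_nonneg _) ?_ hlim
    filter_upwards [eventually_ge_atTop 1] with n hn
    have hn' : (1 : ℝ) ≤ n := by exact_mod_cast hn
    set x := (Real.sqrt n)⁻¹ with hxd
    have hx0 : 0 < x := by positivity
    have hnx : (n : ℝ) * x ^ 2 = 1 := by
      rw [hxd, inv_pow, Real.sq_sqrt (by positivity)]
      field_simp
    have iY : Integrable (fun ω => (psum' Hs Ss (fun h _ => v h) n ω - n * σ2) ^ 2) μ :=
      hc.integrable (t := n) fun ω ω' h => by
        simp only [hc.adp_psum (fun h _ => v h) n ω ω' h]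
    rw [← integral_const_mul, ← integral_sub (hc.integrable (hDadp n))
      ((hc.integrable (hZadp n)).const_mul _)]
    calc ‖∫ ω, (D n ω - Complex.exp ((σ2 / 2 : ℝ)) * Z n ω) ∂μ‖
        ≤ ∫ ω, Real.exp (C / 2) * (x + x ^ 3 *
            (psum' Hs Ss (fun h _ => v h) n ω - n * σ2) ^ 2) / 2 ∂μ := by
          refine norm_integral_le_of_norm_le ?_ (ae_of_all _ fun ω => ?_)
          · exact (((integrable_const _).add (iY.const_mul _)).const_mul _).div_const _
          have hsplit : D n ω = Complex.exp (((psum' Hs Ss (fun h _ => v h) n ω) * x ^ 2 / 2 : ℝ)) * Z n ω := by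
            simp only [hD, hZ, wexp, ← hxd]
            rw [← Complex.exp_add]
            congr 1
            rw [Finset.sum_add_distrib]
            simp only [psum']
            push_cast
            simp only [← Finset.sum_mul, ← Finset.mul_sum, ← Finset.sum_div]
            ring
          have hZn : ‖Z n ω‖ = 1 := by
            simp only [hZ, mul_comm Complex.I, Complex.norm_exp_ofReal_mul_I]
          rw [hsplit, ← sub_mul, norm_mul, hZn, mul_one, ← Complex.ofReal_exp, ← Complex.ofReal_exp,
            ← Complex.ofReal_sub, Complex.norm_real, Real.norm_eq_abs]
          set Y := psum' Hs Ss (fun h _ => v h) n ω with hY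
          have hYC : Y * x ^ 2 / 2 ≤ C / 2 := by
            have : Y ≤ n * C := by
              calc Y ≤ ∑ t ∈ range n, C := Finset.sum_le_sum fun t _ => hvC _
                _ = n * C := by simp
            have := mul_le_mul_of_nonneg_right this (sq_nonneg x)
            have e : n * C * x ^ 2 = C := by rw [mul_right_comm, hnx, one_mul]
            linarith
          have lip : ∀ a b : ℝ, a ≤ C / 2 → b ≤ C / 2 →
              |Real.exp a - Real.exp b| ≤ Real.exp (C / 2) * |a - b| := by
            have aux : ∀ a b : ℝ, a ≤ b → b ≤ C / 2 →
              |Real.exp a - Real.exp b| ≤ Real.exp (C / 2) * |a - b| := by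
              intro a b hab hb
              rw [abs_sub_comm, abs_of_nonneg (sub_nonneg.2 (Real.exp_le_exp.2 hab)),
                abs_sub_comm, abs_of_nonneg (sub_nonneg.2 hab)]
              have e1 : Real.exp b - Real.exp a = Real.exp b * (1 - Real.exp (a - b)) := by
                rw [mul_sub, ← Real.exp_add]; ring_nf
              have e2 : 1 - Real.exp (a - b) ≤ b - a := by
                have := Real.add_one_le_exp (a - b); linarith
              rw [e1]
              calc _ ≤ Real.exp b * (b - a) := mul_le_mul_of_nonneg_left e2 (Real.exp_pos _).le
                _ ≤ _ := mul_le_mul_of_nonneg_right (Real.exp_le_exp.2 hb) (by linarith)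
            intro a b ha hb
            rcases le_total a b with h | h
            · exact aux a b h hb
            · rw [abs_sub_comm, abs_sub_comm a b]; exact aux b a h ha
          refine (lip _ _ hYC (by linarith)).trans ?_
          rw [mul_div_assoc (Real.exp (C / 2))]
          refine mul_le_mul_of_nonneg_left ?_ (Real.exp_pos _).le
          have e3 : Y * x ^ 2 / 2 - σ2 / 2 = x ^ 2 * (Y - n * σ2) / 2 := by
            linear_combination (σ2 / 2) * hnx
          rw [e3, abs_div, abs_mul, abs_of_pos (by positivity : (0:ℝ) < x ^ 2), abs_two]
          refine div_le_div_of_nonneg_right ?_ (by norm_num)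
          rw [← sq_abs (Y - n * σ2)]
          set y := |Y - n * σ2|
          have : 0 ≤ x * (1 - x * y) ^ 2 := by positivity
          have hy : 0 ≤ y := abs_nonneg _
          nlinarith [mul_nonneg (sq_nonneg x) hy]
      _ = Real.exp (C / 2) * (x + x ^ 3 *
            ∫ ω, (psum' Hs Ss (fun h _ => v h) n ω - n * σ2) ^ 2 ∂μ) / 2 := by
          rw [integral_div, integral_const_mul, integral_add (integrable_const _) (iY.const_mul _),
            integral_const_mul]
          simp
      _ ≤ Real.exp (C / 2) * (x + x ^ 3 * (|K| * (2 * n))) / 2 := by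
          have h2 : K * ((n : ℝ) + 1) ≤ |K| * (2 * n) := by
            refine mul_le_mul (le_abs_self _) (by linarith) (by positivity) (abs_nonneg _)
          have := (hK n).trans h2
          gcongr
      _ = Real.exp (C / 2) * ((1 / 2 + |K| * (n * x ^ 2)) * x) := by ring
      _ ≤ _ := by
          rw [hnx]
          gcongr
          · norm_num
          · simp
  have t3 := (t1.sub t2).const_mul (Complex.exp (-(σ2 / 2 : ℝ)))
  refine (t3.congr fun n => ?_).trans ?_
  · rw [sub_sub_cancel, ← mul_assoc, ← Complex.exp_add]
    rw [neg_add_cancel, Complex.exp_zero, one_mul]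
  · simp [neg_div]

end Chain
end clt
end DIG

open MeasureTheory Filter Finset
open scoped BigOperators Topology ENNReal NNReal Classical

namespace DIG
section chisq
set_option linter.unusedSectionVars false
variable {Ω : Type*} [MeasurableSpace Ω] {H S : Type*} [Fintype H] [Fintype S]
variable {μ : Measure Ω} [IsProbabilityMeasure μ] {Q : H → S → ℝ} {π : H → ℝ} {step : H → S → H}
    {Hs : ℕ → Ω → H} {Ss : ℕ → Ω → S}

namespace Chain

lemma adp_meas {β : Type*} [MeasurableSpace β] (hc : Chain μ Q π step Hs Ss) {t : ℕ} {F : Ω → β}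
    (hF : Adp Hs Ss t F) : Measurable F := by
  intro B _
  have : F ⁻¹' B = ⋃ x ∈ {x | ∃ ω, tau Hs Ss t ω = x ∧ F ω ∈ B}, {ω | tau Hs Ss t ω = x} := by
    ext ω
    simp only [Set.mem_preimage, Set.mem_ofPred_eq, Set.mem_iUnion, exists_prop]
    constructor
    · intro h
      exact ⟨_, ⟨ω, rfl, h⟩, rfl⟩
    · rintro ⟨x, ⟨ω', h1, h2⟩, h3⟩
      rw [hF ω ω' ((tau_eq_iff t ω ω').1 (h3.trans h1.symm))]
      exact h2
  rw [this]
  exact MeasurableSet.biUnion (Set.to_countable _) fun x _ => hc.meas_tau t x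

lemma lln_prob (hc : Chain μ Q π step Hs Ss) [Nonempty H] (φ : H → S → ℝ) (η ε : ℝ) (hη : 0 < η)
    (hε : 0 < ε) : ∀ᶠ n : ℕ in atTop,
    μ.real {ω | η * n ≤ |psum' Hs Ss φ n ω - n * ∑ h, π h * ∑ s, Q h s * φ h s|} ≤ ε := by
  obtain ⟨K, hK⟩ := hc.lln φ
  set m := ∑ h, π h * ∑ s, Q h s * φ h s
  have hlim : Tendsto (fun n : ℕ => 2 * |K| / η ^ 2 / (n : ℝ)) atTop (𝓝 0) :=
    tendsto_const_div_atTop_nhds_zero_nat _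
  filter_upwards [hlim.eventually_lt_const hε, eventually_ge_atTop 1] with n hn hn1
  have hn' : (1 : ℝ) ≤ n := by exact_mod_cast hn1
  have hi : Integrable (fun ω => (psum' Hs Ss φ n ω - n * m) ^ 2) μ := by
    refine hc.integrable (t := n) fun ω ω' h => ?_
    rw [hc.adp_psum φ n ω ω' h]
  have h1 := mul_meas_ge_le_integral_of_nonneg (μ := μ)
    (Eventually.of_forall fun ω => sq_nonneg (psum' Hs Ss φ n ω - n * m)) hi ((η * n) ^ 2)
  have h2 : {ω | η * n ≤ |psum' Hs Ss φ n ω - n * m|} =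
      {ω | (η * n) ^ 2 ≤ (psum' Hs Ss φ n ω - n * m) ^ 2} := by
    ext ω
    simp only [Set.mem_ofPred_eq]
    rw [← sq_abs (psum' Hs Ss φ n ω - n * m)]
    exact (pow_le_pow_iff_left₀ (by positivity) (abs_nonneg _) two_ne_zero).symm
  rw [h2]
  have h3 : K * ((n : ℝ) + 1) ≤ |K| * (2 * n) :=
    mul_le_mul (le_abs_self _) (by linarith) (by positivity) (abs_nonneg _)
  have h4 := h1.trans ((hK n).trans h3)
  refine le_trans ?_ hn.le
  rw [div_div, le_div_iff₀ (by positivity)]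
  have h5 : (n : ℝ) * (μ.real {ω | (η * n) ^ 2 ≤ (psum' Hs Ss φ n ω - n * m) ^ 2} * (η ^ 2 * n))
      ≤ n * (2 * |K|) := by
    linarith
  exact le_of_mul_le_mul_left h5 (by linarith)

/-- pair counts -/
noncomputable def cnt2 (Hs : ℕ → Ω → H) (Ss : ℕ → Ω → S) (h : H) (s : S) (n : ℕ) (ω : Ω) : ℝ :=
  psum' Hs Ss (fun h' s' => if h' = h ∧ s' = s then 1 else 0) n ω

/-- history counts -/
noncomputable def cnt1 (Hs : ℕ → Ω → H) (Ss : ℕ → Ω → S) (h : H) (n : ℕ) (ω : Ω) : ℝ :=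
  psum' Hs Ss (fun h' _ => if h' = h then 1 else 0) n ω

lemma cnt2_sum (h : H) (n : ℕ) (ω : Ω) : ∑ s, cnt2 Hs Ss h s n ω = cnt1 Hs Ss h n ω := by
  unfold cnt2 cnt1 psum'
  rw [Finset.sum_comm]
  refine Finset.sum_congr rfl fun t _ => ?_
  by_cases hh : Hs t ω = h <;> simp [hh]

lemma cnt2_nonneg (h : H) (s : S) (n : ℕ) (ω : Ω) : 0 ≤ cnt2 Hs Ss h s n ω := by
  unfold cnt2 psum'
  exact Finset.sum_nonneg fun t _ => by dsimp only; split_ifs <;> norm_num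

lemma cnt1_nonneg (h : H) (n : ℕ) (ω : Ω) : 0 ≤ cnt1 Hs Ss h n ω := by
  unfold cnt1 psum'
  exact Finset.sum_nonneg fun t _ => by dsimp only; split_ifs <;> norm_num

/-- constraint map -/
noncomputable def Lmap (Q : H → S → ℝ) : EuclideanSpace ℝ (H × S) →ₗ[ℝ] (H → ℝ) where
  toFun x := fun h => ∑ s, Real.sqrt (Q h s) * x (h, s)
  map_add' x y := by
    ext h; simp [mul_add, Finset.sum_add_distrib]
  map_smul' c x := by
    ext h; simp only [PiLp.smul_apply, smul_eq_mul, RingHom.id_apply, Pi.smul_apply, Finset.mul_sum]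
    exact Finset.sum_congr rfl fun s _ => by ring

/-- the constraint space -/
noncomputable abbrev ESp (Q : H → S → ℝ) : Submodule ℝ (EuclideanSpace ℝ (H × S)) :=
  LinearMap.ker (Lmap Q)

lemma finrank_ESp (hc : Chain μ Q π step Hs Ss) :
    Module.finrank ℝ (ESp Q) = Fintype.card H * (Fintype.card S - 1) := by
  have hsurj : Function.Surjective (Lmap Q) := by
    intro y
    refine ⟨WithLp.toLp 2 fun p => y p.1 * Real.sqrt (Q p.1 p.2), ?_⟩
    ext h
    simp only [Lmap, LinearMap.coe_mk, AddHom.coe_mk]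
    calc _ = ∑ s, y h * Q h s := Finset.sum_congr rfl fun s _ => by
            have := Real.mul_self_sqrt (hc.qpos h s).le
            linear_combination y h * this
      _ = y h := by rw [← Finset.mul_sum, hc.qsum, mul_one]
  have h1 := LinearMap.finrank_range_add_finrank_ker (Lmap Q)
  rw [LinearMap.range_eq_top.2 hsurj, finrank_top, Module.finrank_fintype_fun_eq_card,
    finrank_euclideanSpace, Fintype.card_prod] at h1
  rw [Nat.mul_sub, mul_one]
  exact (Nat.sub_eq_of_eq_add' h1.symm).symm

/-- increments -/
noncomputable def eta (hc : Chain μ Q π step Hs Ss) (h : H) (s : S) : ESp Q :=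
  ⟨WithLp.toLp 2 fun p => (if h = p.1 then ((if s = p.2 then 1 else 0) - Q p.1 p.2) else 0) /
      (Real.sqrt (π p.1) * Real.sqrt (Q p.1 p.2)), by
    rw [LinearMap.mem_ker]
    ext h'
    simp only [Lmap, LinearMap.coe_mk, AddHom.coe_mk, Pi.zero_apply]
    by_cases hh : h = h'
    · subst hh
      calc _ = ∑ s', ((if s = s' then 1 else 0) - Q h s') * (Real.sqrt (π h))⁻¹ :=
            Finset.sum_congr rfl fun s' _ => by
              have h1 : Real.sqrt (Q h s') ≠ 0 := (Real.sqrt_pos.2 (hc.qpos h s')).ne'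
              have h2 : Real.sqrt (π h) ≠ 0 := (Real.sqrt_pos.2 (hc.ppos h)).ne'
              simp only [if_true]
              field_simp
        _ = 0 := by
            rw [← Finset.sum_mul, Finset.sum_sub_distrib, hc.qsum]; simp
    · simp [hh]⟩

/-- the normalised sum -/
noncomputable def Mv (hc : Chain μ Q π step Hs Ss) (n : ℕ) (ω : Ω) : ESp Q :=
  (Real.sqrt n)⁻¹ • ∑ t ∈ range n, hc.eta (Hs t ω) (Ss t ω)

lemma Mv_adp (hc : Chain μ Q π step Hs Ss) (n : ℕ) : Adp Hs Ss n (hc.Mv n) := by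
  intro ω ω' h
  unfold Mv
  congr 1
  refine Finset.sum_congr rfl fun t ht => ?_
  have ht := Finset.mem_range.1 ht
  rw [hc.adp_H n t ht.le ω ω' h, h.2 t ht]

lemma Mv_apply (hc : Chain μ Q π step Hs Ss) (n : ℕ) (ω : Ω) (h : H) (s : S) :
    (hc.Mv n ω : EuclideanSpace ℝ (H × S)) (h, s) =
      (Real.sqrt n)⁻¹ * ((cnt2 Hs Ss h s n ω - cnt1 Hs Ss h n ω * Q h s) /
        (Real.sqrt (π h) * Real.sqrt (Q h s))) := by
  unfold Mv cnt2 cnt1 psum'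
  rw [Submodule.coe_smul, PiLp.smul_apply, smul_eq_mul, Submodule.coe_sum]
  congr 1
  simp only [WithLp.ofLp_sum, Finset.sum_apply]
  rw [Finset.sum_mul, ← Finset.sum_sub_distrib, Finset.sum_div]
  refine Finset.sum_congr rfl fun t _ => ?_
  simp only [eta]
  by_cases hh : Hs t ω = h <;> simp [hh]

lemma Mv_norm (hc : Chain μ Q π step Hs Ss) (n : ℕ) (ω : Ω) :
    ‖hc.Mv n ω‖ ^ 2 = ∑ h, ∑ s, (cnt2 Hs Ss h s n ω - cnt1 Hs Ss h n ω * Q h s) ^ 2 /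
        (n * π h * Q h s) := by
  rw [Submodule.coe_norm, EuclideanSpace.norm_sq_eq, Fintype.sum_prod_type]
  refine Finset.sum_congr rfl fun h _ => Finset.sum_congr rfl fun s _ => ?_
  rw [Mv_apply, Real.norm_eq_abs, sq_abs, mul_pow, div_pow, mul_pow, inv_pow,
    Real.sq_sqrt (hc.qpos h s).le, Real.sq_sqrt (hc.ppos h).le, Real.sq_sqrt (Nat.cast_nonneg n)]
  rw [inv_mul_eq_div, div_div]
  congr 1; ring

lemma inner_eta (hc : Chain μ Q π step Hs Ss) (h : H) (s : S) (θ : ESp Q) :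
    inner ℝ (hc.eta h s) θ = (θ : EuclideanSpace ℝ (H × S)) (h, s) /
      (Real.sqrt (π h) * Real.sqrt (Q h s)) := by
  have hθ : ∑ s', Real.sqrt (Q h s') * (θ : EuclideanSpace ℝ (H × S)) (h, s') = 0 :=
    congrFun (LinearMap.mem_ker.1 θ.2) h
  rw [Submodule.coe_inner, PiLp.inner_apply, Fintype.sum_prod_type]
  rw [Finset.sum_eq_single h]
  · simp only [eta, if_true]
    calc _ = ∑ s', ((if s = s' then (θ : EuclideanSpace ℝ (H × S)) (h, s') /
              (Real.sqrt (π h) * Real.sqrt (Q h s')) else 0) -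
              (Real.sqrt (π h))⁻¹ * (Real.sqrt (Q h s') *
                (θ : EuclideanSpace ℝ (H × S)) (h, s'))) := by
            refine Finset.sum_congr rfl fun s' _ => ?_
            have h1 : Real.sqrt (Q h s') ≠ 0 := (Real.sqrt_pos.2 (hc.qpos h s')).ne'
            have h2 : Real.sqrt (π h) ≠ 0 := (Real.sqrt_pos.2 (hc.ppos h)).ne'
            have h3 : Q h s' = Real.sqrt (Q h s') ^ 2 := (Real.sq_sqrt (hc.qpos h s').le).symm
            simp only [RCLike.inner_apply, conj_trivial]
            set q := Real.sqrt (Q h s')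
            rw [h3]
            split_ifs <;> field_simp <;> ring
      _ = _ := by
            rw [Finset.sum_sub_distrib, ← Finset.mul_sum, hθ]; simp
  · intro h' _ hh
    simp [eta, Ne.symm hh]
  · simp

lemma charFun_Mv (hc : Chain μ Q π step Hs Ss) [Nonempty H] (θ : ESp Q) :
    Tendsto (fun n => charFun (μ.map (hc.Mv n)) θ) atTop
      (𝓝 (charFun (ProbabilityTheory.stdGaussian (ESp Q)) θ)) := by
  set ξ : H → S → ℝ := fun h s => (θ : EuclideanSpace ℝ (H × S)) (h, s) /
      (Real.sqrt (π h) * Real.sqrt (Q h s)) with hξ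
  have hθ : ∀ h, ∑ s', Real.sqrt (Q h s') * (θ : EuclideanSpace ℝ (H × S)) (h, s') = 0 :=
    fun h => congrFun (LinearMap.mem_ker.1 θ.2) h
  have h0 : ∀ h, ∑ s, Q h s * ξ h s = 0 := by
    intro h
    rw [← mul_zero (Real.sqrt (π h))⁻¹, ← hθ h, Finset.mul_sum]
    refine Finset.sum_congr rfl fun s _ => ?_
    have h1 : Real.sqrt (Q h s) ≠ 0 := (Real.sqrt_pos.2 (hc.qpos h s)).ne'
    have h2 : Real.sqrt (π h) ≠ 0 := (Real.sqrt_pos.2 (hc.ppos h)).ne'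
    have h3 : Q h s = Real.sqrt (Q h s) ^ 2 := (Real.sq_sqrt (hc.qpos h s).le).symm
    simp only [hξ]
    set q := Real.sqrt (Q h s)
    rw [h3]
    field_simp
  have hv : ∑ h, π h * ∑ s, Q h s * ξ h s ^ 2 = ‖θ‖ ^ 2 := by
    rw [Submodule.coe_norm, EuclideanSpace.norm_sq_eq, Fintype.sum_prod_type]
    refine Finset.sum_congr rfl fun h _ => ?_
    rw [Finset.mul_sum]
    refine Finset.sum_congr rfl fun s _ => ?_
    have h1 := (hc.qpos h s).ne'
    have h2 := (hc.ppos h).ne'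
    simp only [hξ]
    rw [div_pow, mul_pow, Real.sq_sqrt (hc.qpos h s).le, Real.sq_sqrt (hc.ppos h).le,
      Real.norm_eq_abs, sq_abs]
    field_simp
  have := hc.clt ξ h0
  rw [hv] at this
  rw [ProbabilityTheory.charFun_stdGaussian]
  convert this using 2
  · rename_i n
    rw [charFun_apply, integral_map (hc.adp_meas (hc.Mv_adp n)).aemeasurable
      (by fun_prop)]
    refine integral_congr_ae (Eventually.of_forall fun ω => ?_)
    simp only
    congr 1
    rw [mul_comm]
    congr 2
    unfold Mv psum'
    refine (real_inner_smul_left (∑ t ∈ range n, hc.eta (Hs t ω) (Ss t ω)) θ _).trans ?_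
    rw [sum_inner, mul_comm]
    congr 1
    exact Finset.sum_congr rfl fun t _ => hc.inner_eta _ _ θ
  · push_cast
    rfl

lemma Mv_open (hc : Chain μ Q π step Hs Ss) [Nonempty H] (c ε : ℝ) (hε : 0 < ε) :
    ∀ᶠ n in atTop, (ProbabilityTheory.stdGaussian (ESp Q)).real {x | ‖x‖ ^ 2 < c} - ε ≤
      μ.real {ω | ‖hc.Mv n ω‖ ^ 2 < c} := by
  have hm : ∀ n, AEMeasurable (hc.Mv n) μ := fun n => (hc.adp_meas (hc.Mv_adp n)).aemeasurable
  let μs : ℕ → ProbabilityMeasure (ESp Q) := fun n =>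
    ⟨μ.map (hc.Mv n), Measure.isProbabilityMeasure_map (hm n)⟩
  let μ0 : ProbabilityMeasure (ESp Q) := ⟨ProbabilityTheory.stdGaussian (ESp Q), inferInstance⟩
  have ht : Tendsto μs atTop (𝓝 μ0) :=
    ProbabilityMeasure.tendsto_of_tendsto_charFun fun θ => hc.charFun_Mv θ
  have hopen : IsOpen {x : ESp Q | ‖x‖ ^ 2 < c} := isOpen_lt (by fun_prop) continuous_const
  have h1 := ProbabilityMeasure.le_liminf_measure_open_of_tendsto ht hopen
  set G := {x : ESp Q | ‖x‖ ^ 2 < c}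
  by_cases h0 : (ProbabilityTheory.stdGaussian (ESp Q)).real G - ε < 0
  · exact Eventually.of_forall fun n => h0.le.trans measureReal_nonneg
  push Not at h0
  have h2 : ENNReal.ofReal ((ProbabilityTheory.stdGaussian (ESp Q)).real G - ε) <
      liminf (fun n => (μs n : Measure (ESp Q)) G) atTop := by
    refine lt_of_lt_of_le ?_ h1
    rw [ENNReal.ofReal_lt_iff_lt_toReal h0 (measure_ne_top _ _)]
    change _ < (ProbabilityTheory.stdGaussian (ESp Q)).real G
    linarith
  filter_upwards [eventually_lt_of_lt_liminf h2] with n hn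
  have h3 : (μs n : Measure (ESp Q)) G = μ {ω | ‖hc.Mv n ω‖ ^ 2 < c} :=
    Measure.map_apply_of_aemeasurable (hm n) hopen.measurableSet
  rw [h3] at hn
  exact ((ENNReal.ofReal_lt_iff_lt_toReal h0 (measure_ne_top _ _)).1 hn).le

/-- The chi-square statistic. -/
noncomputable def chiStat (Q : H → S → ℝ) (Hs : ℕ → Ω → H) (Ss : ℕ → Ω → S) (n : ℕ) (ω : Ω) : ℝ :=
  ∑ h, ∑ s, (cnt2 Hs Ss h s n ω - cnt1 Hs Ss h n ω * Q h s) ^ 2 / (cnt1 Hs Ss h n ω * Q h s)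

lemma chiStat_lim_aux (hc : Chain μ Q π step Hs Ss) [Nonempty H] (I ε : ℝ) (hI : 0 < I)
    (hε : 0 < ε) :
    ∀ᶠ n in atTop, (ProbabilityTheory.stdGaussian (ESp Q)).real {x | ‖x‖ ^ 2 < I} - ε ≤
      μ.real {ω | chiStat Q Hs Ss n ω < I} := by
  set g := ProbabilityTheory.stdGaussian (ESp Q)
  obtain ⟨δ, hδ, hgδ⟩ : ∃ δ : ℝ, 0 < δ ∧ g.real {x | ‖x‖ ^ 2 < I} - ε / 3 <
      g.real {x | ‖x‖ ^ 2 * (1 + δ) < I} := by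
    have hmono : Monotone fun j : ℕ => {x : ESp Q | ‖x‖ ^ 2 * (1 + 1 / ((j : ℝ) + 1)) < I} := by
      intro a b hab x hx
      simp only [Set.mem_ofPred_eq] at hx ⊢
      refine lt_of_le_of_lt ?_ hx
      gcongr
    have hU : (⋃ j : ℕ, {x : ESp Q | ‖x‖ ^ 2 * (1 + 1 / ((j : ℝ) + 1)) < I}) =
        {x | ‖x‖ ^ 2 < I} := by
      ext x
      simp only [Set.mem_iUnion, Set.mem_ofPred_eq]
      constructor
      · rintro ⟨j, hj⟩
        refine lt_of_le_of_lt ?_ hj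
        have : 0 ≤ ‖x‖ ^ 2 * (1 / ((j : ℝ) + 1)) := by positivity
        linarith
      · intro hx
        have hl : Tendsto (fun j : ℕ => ‖x‖ ^ 2 * (1 + 1 / ((j : ℝ) + 1))) atTop
            (𝓝 (‖x‖ ^ 2 * (1 + 0))) :=
          (tendsto_one_div_add_atTop_nhds_zero_nat.const_add 1).const_mul _
        exact (hl.eventually_lt_const (by simpa using hx)).exists
    have ht := tendsto_measure_iUnion_atTop (μ := g) hmono
    rw [hU] at ht
    have ht' := (ENNReal.tendsto_toReal (measure_ne_top g _)).comp ht
    obtain ⟨j, hj⟩ := (ht'.eventually_const_lt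
      (show g.real {x | ‖x‖ ^ 2 < I} - ε / 3 < (g {x | ‖x‖ ^ 2 < I}).toReal by
        change _ < g.real _; linarith)).exists
    exact ⟨1 / ((j : ℝ) + 1), by positivity, hj⟩
  have hM := hc.Mv_open (I / (1 + δ)) (ε / 3) (by positivity)
  have hcard : (0 : ℝ) < Fintype.card H := by exact_mod_cast Fintype.card_pos
  have hL : ∀ h, ∀ᶠ n : ℕ in atTop, μ.real {ω | cnt1 Hs Ss h n ω * (1 + δ) < n * π h} ≤
      ε / 3 / Fintype.card H := by
    intro h
    have hη : 0 < δ / (1 + δ) * π h := mul_pos (by positivity) (hc.ppos h)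
    have := hc.lln_prob (fun h' _ => if h' = h then 1 else 0) (δ / (1 + δ) * π h)
      (ε / 3 / Fintype.card H) hη (by positivity)
    filter_upwards [this] with n hn
    refine (measureReal_mono ?_ (measure_ne_top _ _)).trans hn
    intro ω hω
    simp only [Set.mem_ofPred_eq] at hω ⊢
    have hmean : ∑ h', π h' * ∑ s, Q h' s * (if h' = h then 1 else 0) = π h := by
      rw [Finset.sum_eq_single h]
      · simp [hc.qsum]
      · intro h' _ hh; simp [hh]
      · simp
    rw [hmean]
    change _ ≤ |cnt1 Hs Ss h n ω - n * π h|
    rw [abs_sub_comm]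
    refine le_trans ?_ (le_abs_self _)
    have : cnt1 Hs Ss h n ω < n * π h / (1 + δ) := by rwa [lt_div_iff₀ (by positivity)]
    have e : δ / (1 + δ) * π h * n = n * π h - n * π h / (1 + δ) := by field_simp; ring
    linarith
  filter_upwards [hM, eventually_all.2 hL, eventually_ge_atTop 1] with n hn1 hn2 hn3
  have hn' : (0 : ℝ) < n := by exact_mod_cast hn3
  have hsub : {ω | ‖hc.Mv n ω‖ ^ 2 < I / (1 + δ)} ⊆ {ω | chiStat Q Hs Ss n ω < I} ∪
      ⋃ h ∈ (Finset.univ : Finset H), {ω | cnt1 Hs Ss h n ω * (1 + δ) < n * π h} := by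
    intro ω hω
    by_cases hb : ∃ h, cnt1 Hs Ss h n ω * (1 + δ) < n * π h
    · right; simpa using hb
    · left
      push Not at hb
      simp only [Set.mem_ofPred_eq] at hω ⊢
      rw [lt_div_iff₀ (by positivity), hc.Mv_norm] at hω
      refine lt_of_le_of_lt ?_ hω
      unfold chiStat
      rw [Finset.sum_mul]
      refine Finset.sum_le_sum fun h _ => ?_
      rw [Finset.sum_mul]
      refine Finset.sum_le_sum fun s _ => ?_
      have hp := hc.ppos h
      have hq := hc.qpos h s
      have hN : 0 < cnt1 Hs Ss h n ω := by
        have := lt_of_lt_of_le (mul_pos hn' hp) (hb h)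
        exact pos_of_mul_pos_left this (by positivity)
      rw [div_mul_eq_mul_div, div_le_div_iff₀ (by positivity) (by positivity)]
      rw [mul_assoc ((cnt2 Hs Ss h s n ω - cnt1 Hs Ss h n ω * Q h s) ^ 2)]
      refine mul_le_mul_of_nonneg_left ?_ (sq_nonneg _)
      have := mul_le_mul_of_nonneg_right (hb h) hq.le
      linarith
  have h5 := (measureReal_mono hsub (measure_ne_top μ _)).trans (measureReal_union_le _ _)
  have h6 := measureReal_biUnion_finset_le (μ := μ) (Finset.univ : Finset H)
    (fun h => {ω | cnt1 Hs Ss h n ω * (1 + δ) < n * π h})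
  have h7 : ∑ h : H, μ.real {ω | cnt1 Hs Ss h n ω * (1 + δ) < n * π h} ≤ ε / 3 := by
    calc _ ≤ ∑ h : H, ε / 3 / Fintype.card H := Finset.sum_le_sum fun h _ => hn2 h
      _ = ε / 3 := by
        rw [Finset.sum_const, Finset.card_univ, nsmul_eq_mul]; field_simp
  have h8 : {x : ESp Q | ‖x‖ ^ 2 * (1 + δ) < I} = {x | ‖x‖ ^ 2 < I / (1 + δ)} := by
    ext x; simp only [Set.mem_ofPred_eq]; rw [lt_div_iff₀ (by positivity)]
  rw [h8] at hgδ
  linarith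

lemma chiStat_lim (hc : Chain μ Q π step Hs Ss) [Nonempty H] (I ε : ℝ) (hI : 0 < I)
    (hε : 0 < ε) (r : ℕ) (hr : r = Fintype.card H * (Fintype.card S - 1)) :
    ∀ᶠ n in atTop, (ProbabilityTheory.gammaMeasure ((r : ℝ) / 2) (1 / 2) (Set.Iic I)).toReal - ε ≤
      μ.real {ω | chiStat Q Hs Ss n ω < I} := by
  rcases Nat.eq_zero_or_pos r with h0 | h0
  · refine Eventually.of_forall fun n => ?_
    have : (ProbabilityTheory.gammaMeasure ((r : ℝ) / 2) (1 / 2) (Set.Iic I)).toReal = 0 := by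
      rw [h0, ProbabilityTheory.gammaMeasure]
      have : ProbabilityTheory.gammaPDF (((0 : ℕ) : ℝ) / 2) (1 / 2) = 0 := by
        ext x; simp [ProbabilityTheory.gammaPDF, ProbabilityTheory.gammaPDFReal]
      rw [this]; simp
    rw [this]
    have : 0 ≤ μ.real {ω | chiStat Q Hs Ss n ω < I} := measureReal_nonneg
    linarith
  · have := hc.chiStat_lim_aux I ε hI hε
    have hf := hc.finrank_ESp
    rw [← hr] at hf
    rw [stdG_ball (by rw [hf]; exact h0), hf] at this
    exact this

end Chain
end chisq
end DIG

open MeasureTheory Filter Finset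
open scoped BigOperators Topology ENNReal NNReal Classical

namespace DIG
section gibbs
set_option linter.unusedSectionVars false

/-- generic marginal -/
noncomputable def marg {W : Type*} [Fintype W] (R : W → W → Prop) (p : W → ℝ) (w : W) : ℝ :=
  ∑ w', if R w' w then p w' else 0

lemma gibbs {W Y : Type*} [Fintype W] [Fintype Y] (p u : W → ℝ) (hp : ∀ w, 0 ≤ p w)
    (hu0 : ∀ w, 0 ≤ u w) (RA RB : W → W → Prop) (r : W → Y → W) (hE : Equivalence RB)
    (hR : ∀ w' w, (if RA w' w then (1 : ℝ) else 0) = ∑ y, if RB w (r w' y) then 1 else 0)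
    (hu : ∀ w w', RB w w' → u w = u w') (hsum : ∀ w', ∑ y, u (r w' y) ≤ 1) :
    ∑ w, p w * (u w * (∑ w', if RA w' w then p w' else 0) / (∑ w', if RB w' w then p w' else 0))
      ≤ ∑ w, p w := by
  set B : W → ℝ := fun w => ∑ w', if RB w' w then p w' else 0 with hB
  have hB0 : ∀ w, 0 ≤ B w := fun w => Finset.sum_nonneg fun w' _ => by
    split_ifs
    · exact hp w'
    · exact le_rfl
  have hBc : ∀ w w', RB w w' → B w = B w' := by
    intro w w' h
    refine Finset.sum_congr rfl fun v _ => ?_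
    have : RB v w ↔ RB v w' := ⟨fun h1 => hE.trans h1 h, fun h1 => hE.trans h1 (hE.symm h)⟩
    simp only [this]
  calc _ = ∑ w, ∑ w', p w' * (∑ y, if RB w (r w' y) then p w * (u w / B w) else 0) := by
        refine Finset.sum_congr rfl fun w _ => ?_
        rw [mul_div_right_comm, Finset.mul_sum, Finset.mul_sum]
        refine Finset.sum_congr rfl fun w' _ => ?_
        have h1 : (∑ y, if RB w (r w' y) then p w * (u w / B w) else 0) =
            p w * (u w / B w) * (if RA w' w then (1 : ℝ) else 0) := by
          rw [hR, Finset.mul_sum]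
          exact Finset.sum_congr rfl fun y _ => by split_ifs <;> simp
        rw [h1]
        split_ifs <;> ring
    _ = ∑ w', p w' * ∑ y, ∑ w, (if RB w (r w' y) then p w * (u w / B w) else 0) := by
        rw [Finset.sum_comm]
        refine Finset.sum_congr rfl fun w' _ => ?_
        rw [← Finset.mul_sum, Finset.sum_comm]
    _ ≤ ∑ w', p w' * 1 := by
        refine Finset.sum_le_sum fun w' _ => mul_le_mul_of_nonneg_left ?_ (hp w')
        refine le_trans (Finset.sum_le_sum fun y _ => ?_) (hsum w')
        have h1 : ∑ w, (if RB w (r w' y) then p w * (u w / B w) else 0) =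
            B (r w' y) * (u (r w' y) / B (r w' y)) := by
          rw [hB]
          simp only
          rw [Finset.sum_mul]
          refine Finset.sum_congr rfl fun w _ => ?_
          split_ifs with h
          · have e1 := hu _ _ h
            have e2 := hBc _ _ h
            rw [e1]
            simp only [hB] at e2
            rw [e2]
          · simp
        rw [h1]
        rcases (hB0 (r w' y)).eq_or_lt with h | h
        · rw [← h]; simpa using hu0 _
        · rw [mul_div_cancel₀ _ h.ne']
    _ = _ := by simp

lemma marg_pos {W : Type*} [Fintype W] (p : W → ℝ) (hp : ∀ w, 0 ≤ p w) (R : W → W → Prop) (w : W)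
    (hw : 0 < p w) (hR : R w w) : 0 < marg R p w := by
  unfold marg
  refine lt_of_lt_of_le hw ?_
  have := Finset.single_le_sum (f := fun w' => if R w' w then p w' else 0)
    (fun w' _ => by
      split_ifs
      · exact hp w'
      · exact le_rfl) (Finset.mem_univ w)
  simpa [hR] using this

lemma gibbs_log {W Y : Type*} [Fintype W] [Fintype Y] (p u : W → ℝ) (hp : ∀ w, 0 ≤ p w)
    (hu0 : ∀ w, 0 < u w) (RA RB : W → W → Prop) (r : W → Y → W) (hE : Equivalence RB)
    (hA : ∀ w, RA w w)
    (hR : ∀ w' w, (if RA w' w then (1 : ℝ) else 0) = ∑ y, if RB w (r w' y) then 1 else 0)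
    (hu : ∀ w w', RB w w' → u w = u w') (hsum : ∀ w', ∑ y, u (r w' y) ≤ 1) :
    0 ≤ ∑ w, p w * Real.log (marg RB p w /
      (marg RA p w * u w)) := by
  have h : ∑ w, p w * (u w * marg RA p w / marg RB p w) ≤ ∑ w, p w :=
    gibbs p u hp (fun w => (hu0 w).le) RA RB r hE hR hu hsum
  have h2 : ∑ w, (p w - p w * (u w * marg RA p w /
      marg RB p w)) ≤
      ∑ w, p w * Real.log (marg RB p w /
      (marg RA p w * u w)) := by
    refine Finset.sum_le_sum fun w _ => ?_
    rcases (hp w).eq_or_lt with h0 | h0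
    · rw [← h0]; simp
    · have a := marg_pos p hp RA w h0 (hA w)
      have b := marg_pos p hp RB w h0 (hE.refl w)
      set A := marg RA p w
      set B := marg RB p w
      have hl := Real.log_le_sub_one_of_pos (show 0 < u w * A / B by have := hu0 w; positivity)
      have e : Real.log (B / (A * u w)) = - Real.log (u w * A / B) := by
        rw [← Real.log_inv, inv_div, mul_comm A]
      rw [e]
      nlinarith
  rw [Finset.sum_sub_distrib] at h2
  linarith

end gibbs

section det
set_option linter.unusedSectionVars false
variable {𝒳 : Type*} [Fintype 𝒳] [DecidableEq 𝒳] [Nonempty 𝒳] {m k : ℕ}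

/-- history part of a block -/
def hist (w : MBlk 𝒳 m (k+1)) : MBlk 𝒳 m k := fun l => Fin.init (w l)

/-- last symbol part of a block -/
def lst (w : MBlk 𝒳 m (k+1)) : MSym 𝒳 m := fun l => w l (Fin.last k)

/-- history marginal -/
noncomputable def mMargH (p : MBlk 𝒳 m (k+1) → ℝ) (w : MBlk 𝒳 m (k+1)) : ℝ :=
  marg (fun w' w => hist w' = hist w) p w

/-- conditioning relation -/
def RA (i j : Fin m) (w' w : MBlk 𝒳 m (k+1)) : Prop :=
  Fin.init (w' j) = Fin.init (w j) ∧ ∀ l, l ≠ i → l ≠ j → w' l = w l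
/-- relation with target symbol -/
def RB (i j : Fin m) (w' w : MBlk 𝒳 m (k+1)) : Prop :=
  w' j = w j ∧ ∀ l, l ≠ i → l ≠ j → w' l = w l
/-- relation with source block -/
def RC (i j : Fin m) (w' w : MBlk 𝒳 m (k+1)) : Prop :=
  w' i = w i ∧ Fin.init (w' j) = Fin.init (w j) ∧ ∀ l, l ≠ i → l ≠ j → w' l = w l

lemma mMargA_eq (p : MBlk 𝒳 m (k+1) → ℝ) (i j : Fin m) (w : MBlk 𝒳 m (k+1)) :
    mMargA p i j w = marg (RA i j) p w :=
  Finset.sum_congr rfl fun _ _ => if_congr Iff.rfl rfl rfl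
lemma mMargB_eq (p : MBlk 𝒳 m (k+1) → ℝ) (i j : Fin m) (w : MBlk 𝒳 m (k+1)) :
    mMargB p i j w = marg (RB i j) p w :=
  Finset.sum_congr rfl fun _ _ => if_congr Iff.rfl rfl rfl
lemma mMargC_eq (p : MBlk 𝒳 m (k+1) → ℝ) (i j : Fin m) (w : MBlk 𝒳 m (k+1)) :
    mMargC p i j w = marg (RC i j) p w :=
  Finset.sum_congr rfl fun _ _ => if_congr Iff.rfl rfl rfl

lemma blk_ext {k : ℕ} (a b : Blk 𝒳 (k+1)) :
    a = b ↔ Fin.init a = Fin.init b ∧ a (Fin.last k) = b (Fin.last k) := by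
  constructor
  · rintro rfl; exact ⟨rfl, rfl⟩
  · rintro ⟨h1, h2⟩
    rw [← Fin.snoc_init_self a, ← Fin.snoc_init_self b, h1, h2]

/-- one-symbol marginal of the kernel -/
noncomputable def G1 (Q : MBlk 𝒳 m k → MSym 𝒳 m → ℝ) (j : Fin m) (h : MBlk 𝒳 m k)
    (s : MSym 𝒳 m) : ℝ := ∑ y, Q h (Function.update s j y)

lemma G1_congr (Q : MBlk 𝒳 m k → MSym 𝒳 m → ℝ) (j : Fin m) (h : MBlk 𝒳 m k)
    (s s' : MSym 𝒳 m) (hs : ∀ l, l ≠ j → s l = s' l) : G1 Q j h s = G1 Q j h s' := by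
  refine Finset.sum_congr rfl fun y _ => ?_
  congr 1
  ext l
  by_cases hl : l = j
  · subst hl; simp
  · simp [hl, hs l hl]

lemma G1_pos (Q : MBlk 𝒳 m k → MSym 𝒳 m → ℝ) (hQpos : ∀ h s, 0 < Q h s) (j : Fin m)
    (h : MBlk 𝒳 m k) (s : MSym 𝒳 m) : 0 < G1 Q j h s :=
  Finset.sum_pos (fun _ _ => hQpos _ _) Finset.univ_nonempty

lemma G2_congr (Q : MBlk 𝒳 m k → MSym 𝒳 m → ℝ) (hQpos : ∀ h s, 0 < Q h s) (i j : Fin m)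
    (hf : MIsFactorizedAt Q i j) (h h' : MBlk 𝒳 m k) (s s' : MSym 𝒳 m)
    (hj : h j = h' j) (sj : s j = s' j) (hl : ∀ l, l ≠ i → l ≠ j → h l = h' l ∧ s l = s' l) :
    Q h s / G1 Q j h s = Q h' s' / G1 Q j h' s' := by
  obtain ⟨g1, g2, hg1, hg2, hg⟩ := hf
  have key : ∀ h s, Q h s / G1 Q j h s = g2 h s / ∑ y, g2 h (Function.update s j y) := by
    intro h s
    have h0 : g1 h s ≠ 0 := fun h0 => by
      have := hQpos h s; rw [hg, h0, zero_mul] at this; exact lt_irrefl _ this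
    have : G1 Q j h s = g1 h s * ∑ y, g2 h (Function.update s j y) := by
      unfold G1
      rw [Finset.mul_sum]
      refine Finset.sum_congr rfl fun y _ => ?_
      rw [hg, hg1 h (Function.update s j y) s fun l hl => by simp [hl]]
    rw [this, hg, mul_div_mul_left _ _ h0]
  rw [key, key]
  congr 1
  · exact hg2 _ _ _ _ hj sj hl
  · refine Finset.sum_congr rfl fun y _ => hg2 _ _ _ _ hj (by simp) fun l h1 h2 => ?_
    simp [h2, hl l h1 h2]

lemma condMI_le (Q : MBlk 𝒳 m k → MSym 𝒳 m → ℝ) (hQpos : ∀ h s, 0 < Q h s)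
    (hQ1 : ∀ h, ∑ s, Q h s = 1) (i j : Fin m) (hij : i ≠ j)
    (hf : MIsFactorizedAt Q i j) (p : MBlk 𝒳 m (k+1) → ℝ) (hp : ∀ w, 0 ≤ p w) :
    mCondMI p i j ≤ ∑ w, p w * Real.log (p w / (mMargH p w * Q (hist w) (lst w))) := by
  have hG1 := G1_pos Q hQpos j
  have hB : 0 ≤ ∑ w, p w * Real.log (mMargB p i j w /
      (mMargA p i j w * (Q (hist w) (lst w) / G1 Q j (hist w) (lst w)))) := by
    simp only [mMargA_eq, mMargB_eq]
    refine gibbs_log p (fun w => Q (hist w) (lst w) / G1 Q j (hist w) (lst w)) hp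
      (fun w => div_pos (hQpos _ _) (hG1 _ _))
      (RA i j) (RB i j)
      (fun w (y : 𝒳) => Function.update w j (Fin.snoc (Fin.init (w j)) y)) ?_ ?_ ?_ ?_ ?_
    · refine ⟨fun w => ⟨rfl, fun _ _ _ => rfl⟩, fun h => ⟨h.1.symm, fun l h1 h2 => (h.2 l h1 h2).symm⟩,
        fun h h' => ⟨h.1.trans h'.1, fun l h1 h2 => (h.2 l h1 h2).trans (h'.2 l h1 h2)⟩⟩
    · exact fun w => ⟨rfl, fun _ _ _ => rfl⟩
    · intro w' w
      have : ∀ y : 𝒳, (w j = Function.update w' j (Fin.snoc (Fin.init (w' j)) y) j ∧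
          ∀ l, l ≠ i → l ≠ j → w l = Function.update w' j (Fin.snoc (Fin.init (w' j)) y) l) ↔
          (w j (Fin.last k) = y ∧ (Fin.init (w' j) = Fin.init (w j) ∧
            ∀ l, l ≠ i → l ≠ j → w' l = w l)) := by
        intro y
        rw [Function.update_self, blk_ext, Fin.init_snoc, Fin.snoc_last]
        constructor
        · rintro ⟨⟨h1, h2⟩, h3⟩
          refine ⟨h2, h1.symm, fun l a b => ?_⟩
          have := h3 l a b
          rw [Function.update_of_ne b] at this
          exact this.symm
        · rintro ⟨h2, h1, h3⟩
          refine ⟨⟨h1.symm, h2⟩, fun l a b => ?_⟩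
          rw [Function.update_of_ne b]
          exact (h3 l a b).symm
      simp only [RA, RB, RC]
      simp only [this, ite_and, Finset.sum_ite_eq, Finset.mem_univ, if_true]
      by_cases h1 : Fin.init (w' j) = Fin.init (w j) <;>
        by_cases h2 : (∀ l, l ≠ i → l ≠ j → w' l = w l) <;> simp only [h1, h2] <;> simp
    · rintro w w' ⟨h1, h2⟩
      refine G2_congr Q hQpos i j hf _ _ _ _ ?_ ?_ ?_
      · simp [hist, h1]
      · simp [lst, h1]
      · intro l a b; simp [hist, lst, h2 l a b]
    · intro w
      have e1 : ∀ y, hist (Function.update w j (Fin.snoc (Fin.init (w j)) y)) = hist w := by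
        intro y; ext l t
        by_cases hl : l = j
        · subst hl; simp [hist]
        · simp [hist, hl]
      have e2 : ∀ y, lst (Function.update w j (Fin.snoc (Fin.init (w j)) y)) =
          Function.update (lst w) j y := by
        intro y; ext l
        by_cases hl : l = j
        · subst hl; simp [lst]
        · simp [lst, hl]
      have e3 : ∀ y, G1 Q j (hist w) (Function.update (lst w) j y) = G1 Q j (hist w) (lst w) :=
        fun y => G1_congr _ _ _ _ _ fun l hl => by simp [hl]
      simp only [e1, e2, e3]
      rw [← Finset.sum_div]
      exact (div_self (hG1 _ _).ne').le
  have hC : 0 ≤ ∑ w, p w * Real.log (mMargC p i j w /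
      (mMargH p w * G1 Q j (hist w) (lst w))) := by
    simp only [mMargC_eq, mMargH]
    refine gibbs_log p (fun w => G1 Q j (hist w) (lst w)) hp
      (fun w => hG1 _ _)
      (fun w' w => hist w' = hist w)
      (RC i j)
      (fun w (z : {l : Fin m // l ≠ j} → 𝒳) => fun l => Fin.snoc (hist w l)
        ((Equiv.funSplitAt j 𝒳).symm (lst w j, z) l)) ?_ ?_ ?_ ?_ ?_
    · refine ⟨fun w => ⟨rfl, rfl, fun _ _ _ => rfl⟩,
        fun h => ⟨h.1.symm, h.2.1.symm, fun l h1 h2 => (h.2.2 l h1 h2).symm⟩,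
        fun h h' => ⟨h.1.trans h'.1, h.2.1.trans h'.2.1,
          fun l h1 h2 => (h.2.2 l h1 h2).trans (h'.2.2 l h1 h2)⟩⟩
    · exact fun w => rfl
    · intro w' w
      have : ∀ z : {l : Fin m // l ≠ j} → 𝒳,
          (w i = (Fin.snoc (hist w' i) ((Equiv.funSplitAt j 𝒳).symm (lst w' j, z) i) : Blk 𝒳 (k+1)) ∧
          Fin.init (w j) = Fin.init (Fin.snoc (hist w' j)
              ((Equiv.funSplitAt j 𝒳).symm (lst w' j, z) j) : Blk 𝒳 (k+1)) ∧
            ∀ l, l ≠ i → l ≠ j → w l = (Fin.snoc (hist w' l)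
              ((Equiv.funSplitAt j 𝒳).symm (lst w' j, z) l) : Blk 𝒳 (k+1))) ↔
          ((fun l : {l : Fin m // l ≠ j} => lst w l) = z ∧ hist w' = hist w) := by
        intro z
        simp only [blk_ext, Fin.init_snoc, Fin.snoc_last]
        constructor
        · rintro ⟨⟨a1, a2⟩, a3, a4⟩
          constructor
          · ext ⟨l, hl⟩
            by_cases hli : l = i
            · subst hli; simpa [lst, hl, Equiv.funSplitAt] using a2
            · simpa [lst, hl, Equiv.funSplitAt] using (a4 l hli hl).2
          · funext l
            by_cases hlj : l = j
            · subst hlj; exact a3.symm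
            by_cases hli : l = i
            · subst hli; exact a1.symm
            · exact (a4 l hli hlj).1.symm
        · rintro ⟨rfl, b2⟩
          rw [b2]
          refine ⟨⟨rfl, ?_⟩, rfl, fun l a b => ⟨rfl, ?_⟩⟩
          · simp [lst, hij, Equiv.funSplitAt]
          · simp [lst, b, Equiv.funSplitAt]
      simp only [RA, RB, RC]
      simp only [this, ite_and, Finset.sum_ite_eq, Finset.mem_univ, if_true]
      split_ifs <;> tauto
    · rintro w w' ⟨h1, h2, h3⟩
      have e : hist w = hist w' := by
        funext l
        by_cases hlj : l = j
        · subst hlj; exact h2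
        by_cases hli : l = i
        · subst hli; simp [hist, h1]
        · simp [hist, h3 l hli hlj]
      rw [e]
      refine G1_congr _ _ _ _ _ fun l hl => ?_
      by_cases hli : l = i
      · subst hli; simp [lst, h1]
      · simp [lst, h3 l hli hl]
    · intro w
      have e1 : ∀ z : {l : Fin m // l ≠ j} → 𝒳, hist (fun l => (Fin.snoc (hist w l)
        ((Equiv.funSplitAt j 𝒳).symm (lst w j, z) l) : Blk 𝒳 (k+1))) = hist w := by
        intro z; funext l; simp [hist]
      have e2 : ∀ z : {l : Fin m // l ≠ j} → 𝒳, lst (fun l => (Fin.snoc (hist w l)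
        ((Equiv.funSplitAt j 𝒳).symm (lst w j, z) l) : Blk 𝒳 (k+1))) =
          (Equiv.funSplitAt j 𝒳).symm (lst w j, z) := by
        intro z; funext l; simp [lst]
      simp only [e1, e2]
      unfold G1
      have e3 : ∀ (z : {l : Fin m // l ≠ j} → 𝒳) (y : 𝒳),
          Function.update ((Equiv.funSplitAt j 𝒳).symm (lst w j, z)) j y =
            (Equiv.funSplitAt j 𝒳).symm (y, z) := by
        intro z y
        funext l
        by_cases hl : l = j
        · subst hl; simp [Equiv.funSplitAt]
        · simp [hl, Equiv.funSplitAt]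
      simp only [e3]
      rw [Finset.sum_comm, ← Fintype.sum_prod_type (f := fun x : 𝒳 × ({l : Fin m // l ≠ j} → 𝒳) =>
        Q (hist w) ((Equiv.funSplitAt j 𝒳).symm x)),
        (Equiv.funSplitAt j 𝒳).symm.sum_comp (fun s => Q (hist w) s), hQ1]
  have hfin : ∑ w, p w * Real.log (p w / (mMargH p w * Q (hist w) (lst w))) - mCondMI p i j =
      (∑ w, p w * Real.log (mMargB p i j w /
      (mMargA p i j w * (Q (hist w) (lst w) / G1 Q j (hist w) (lst w))))) +
      ∑ w, p w * Real.log (mMargC p i j w /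
      (mMargH p w * G1 Q j (hist w) (lst w))) := by
    unfold mCondMI
    rw [← Finset.sum_sub_distrib, ← Finset.sum_add_distrib]
    refine Finset.sum_congr rfl fun w _ => ?_
    rcases (hp w).eq_or_lt with h0 | h0
    · rw [← h0]; simp
    · have hA : 0 < mMargA p i j w := (mMargA_eq p i j w) ▸ marg_pos p hp
        (RA i j) w h0
        ⟨rfl, fun _ _ _ => rfl⟩
      have hB : 0 < mMargB p i j w := (mMargB_eq p i j w) ▸ marg_pos p hp
        (RB i j) w h0
        ⟨rfl, fun _ _ _ => rfl⟩
      have hC : 0 < mMargC p i j w := (mMargC_eq p i j w) ▸ marg_pos p hp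
        (RC i j) w h0 ⟨rfl, rfl, fun _ _ _ => rfl⟩
      have hH : 0 < mMargH p w := marg_pos p hp (fun w' w => hist w' = hist w) w h0 rfl
      have hq := hQpos (hist w) (lst w)
      have hg := hG1 (hist w) (lst w)
      rw [← mul_sub, ← mul_add]
      congr 1
      rw [← Real.log_div (by positivity) (by positivity),
        ← Real.log_mul (by positivity) (by positivity)]
      congr 1
      field_simp
  linarith

end det
end DIG

open MeasureTheory Filter Finset
open scoped BigOperators Topology ENNReal NNReal Classical

namespace DIG
section nonfact
set_option linter.unusedSectionVars false
variable {𝒳 : Type*} [Fintype 𝒳] [DecidableEq 𝒳] [Nonempty 𝒳] {m k : ℕ}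

/-- replace the last symbol of node `j` -/
def upl (j : Fin m) (w : MBlk 𝒳 m (k+1)) (y : 𝒳) : MBlk 𝒳 m (k+1) :=
  Function.update w j (Fin.snoc (Fin.init (w j)) y)

/-- recombine -/
def comb (h : MBlk 𝒳 m k) (s : MSym 𝒳 m) : MBlk 𝒳 m (k+1) := fun l => Fin.snoc (h l) (s l)

lemma hist_comb (h : MBlk 𝒳 m k) (s : MSym 𝒳 m) : hist (comb h s) = h := by
  funext l; simp [hist, comb]

lemma lst_comb (h : MBlk 𝒳 m k) (s : MSym 𝒳 m) : lst (comb h s) = s := by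
  funext l; simp [lst, comb]

lemma comb_hist_lst (w : MBlk 𝒳 m (k+1)) : comb (hist w) (lst w) = w := by
  funext l; simp [hist, comb, lst]

/-- blocks are pairs -/
def combEquiv : MBlk 𝒳 m k × MSym 𝒳 m ≃ MBlk 𝒳 m (k+1) where
  toFun x := comb x.1 x.2
  invFun w := (hist w, lst w)
  left_inv x := Prod.ext (hist_comb x.1 x.2) (lst_comb x.1 x.2)
  right_inv w := comb_hist_lst w

lemma RA_upl (i j : Fin m) (w' w : MBlk 𝒳 m (k+1)) (y : 𝒳) :
    RB i j w (upl j w' y) ↔ (w j (Fin.last k) = y ∧ RA i j w' w) := by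
  unfold RB RA upl
  rw [Function.update_self, blk_ext, Fin.init_snoc, Fin.snoc_last]
  constructor
  · rintro ⟨⟨h1, h2⟩, h3⟩
    refine ⟨h2, h1.symm, fun l a b => ?_⟩
    have := h3 l a b
    rw [Function.update_of_ne b] at this
    exact this.symm
  · rintro ⟨h2, h1, h3⟩
    refine ⟨⟨h1.symm, h2⟩, fun l a b => ?_⟩
    rw [Function.update_of_ne b]
    exact (h3 l a b).symm

lemma RC_upl (i j : Fin m) (hij : i ≠ j) (w' w : MBlk 𝒳 m (k+1)) (y : 𝒳) :
    w = upl j w' y ↔ (w j (Fin.last k) = y ∧ RC i j w' w) := by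
  unfold RC upl
  constructor
  · rintro rfl
    refine ⟨by simp, ?_, by simp, fun l _ b => ?_⟩
    · rw [Function.update_of_ne hij]
    · rw [Function.update_of_ne b]
  · rintro ⟨h2, h1, h3, h4⟩
    funext l
    by_cases hlj : l = j
    · subst hlj
      rw [Function.update_self, blk_ext, Fin.init_snoc, Fin.snoc_last]
      exact ⟨h3.symm, h2⟩
    rw [Function.update_of_ne hlj]
    by_cases hli : l = i
    · subst hli; exact h1.symm
    · exact (h4 l hli hlj).symm

lemma RA_equiv (i j : Fin m) : Equivalence (RA (𝒳 := 𝒳) (k := k) i j) :=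
  ⟨fun w => ⟨rfl, fun _ _ _ => rfl⟩, fun h => ⟨h.1.symm, fun l h1 h2 => (h.2 l h1 h2).symm⟩,
        fun h h' => ⟨h.1.trans h'.1, fun l h1 h2 => (h.2 l h1 h2).trans (h'.2 l h1 h2)⟩⟩

lemma RB_equiv (i j : Fin m) : Equivalence (RB (𝒳 := 𝒳) (k := k) i j) :=
  ⟨fun w => ⟨rfl, fun _ _ _ => rfl⟩, fun h => ⟨h.1.symm, fun l h1 h2 => (h.2 l h1 h2).symm⟩,
        fun h h' => ⟨h.1.trans h'.1, fun l h1 h2 => (h.2 l h1 h2).trans (h'.2 l h1 h2)⟩⟩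

lemma RC_equiv (i j : Fin m) : Equivalence (RC (𝒳 := 𝒳) (k := k) i j) :=
  ⟨fun w => ⟨rfl, rfl, fun _ _ _ => rfl⟩,
        fun h => ⟨h.1.symm, h.2.1.symm, fun l h1 h2 => (h.2.2 l h1 h2).symm⟩,
        fun h h' => ⟨h.1.trans h'.1, h.2.1.trans h'.2.1,
          fun l h1 h2 => (h.2.2 l h1 h2).trans (h'.2.2 l h1 h2)⟩⟩

lemma marg_congr {W : Type*} [Fintype W] (R : W → W → Prop) (hR : Equivalence R) (p : W → ℝ)
    (w w' : W) (h : R w w') : marg R p w = marg R p w' := by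
  refine Finset.sum_congr rfl fun v _ => ?_
  have : R v w ↔ R v w' := ⟨fun h1 => hR.trans h1 h, fun h1 => hR.trans h1 (hR.symm h)⟩
  simp only [this]

lemma sum_B (p : MBlk 𝒳 m (k+1) → ℝ) (i j : Fin m) (w : MBlk 𝒳 m (k+1)) :
    ∑ y, marg (RB i j) p (upl j w y) = marg (RA i j) p w := by
  unfold marg
  rw [Finset.sum_comm]
  refine Finset.sum_congr rfl fun v _ => ?_
  simp only [RA_upl]
  have : RA i j w v ↔ RA i j v w := ⟨(RA_equiv i j).symm, (RA_equiv i j).symm⟩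
  simp only [this]
  by_cases h : RA i j v w <;> simp [h]

lemma condMI_pos (i j : Fin m) (hij : i ≠ j) (p : MBlk 𝒳 m (k+1) → ℝ) (hp : ∀ w, 0 < p w)
    (hM : mCondMI p i j ≤ 0) (w : MBlk 𝒳 m (k+1)) :
    p w * marg (RA i j) p w = marg (RB i j) p w * marg (RC i j) p w := by
  have hp' := fun w => (hp w).le
  have hA : ∀ w, 0 < marg (RA i j) p w := fun w => marg_pos p hp' _ w (hp w) ((RA_equiv i j).refl w)
  have hB : ∀ w, 0 < marg (RB i j) p w := fun w => marg_pos p hp' _ w (hp w) ((RB_equiv i j).refl w)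
  have hC : ∀ w, 0 < marg (RC i j) p w := fun w => marg_pos p hp' _ w (hp w) ((RC_equiv i j).refl w)
  have hg : ∑ w, p w * (marg (RB i j) p w / marg (RA i j) p w * marg (RC i j) p w / marg Eq p w)
      ≤ ∑ w, p w := gibbs p (fun w => marg (RB i j) p w / marg (RA i j) p w) hp'
    (fun w => (div_pos (hB w) (hA w)).le) (RC i j) Eq (upl j) eq_equivalence
    (by
      intro w' w
      simp only [RC_upl i j hij]
      by_cases h : RC i j w' w <;> simp [h])
    (by rintro w w' rfl; rfl)
    (by
      intro w
      have : ∀ y, marg (RA i j) p (upl j w y) = marg (RA i j) p w := fun y =>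
        marg_congr _ (RA_equiv i j) p _ _ ⟨by simp [upl], fun l _ b => by simp [upl, b]⟩
      simp only [this]
      rw [← Finset.sum_div, sum_B, div_self (hA w).ne'])
  have e1 : ∀ w, marg Eq p w = p w := by
    intro w
    unfold marg
    rw [Finset.sum_eq_single w]
    · simp
    · intro b _ hb; simp [hb]
    · simp
  simp only [e1] at hg
  unfold mCondMI at hM
  simp only [mMargA_eq, mMargB_eq, mMargC_eq] at hM
  set x : MBlk 𝒳 m (k+1) → ℝ := fun w =>
    marg (RB i j) p w / marg (RA i j) p w * marg (RC i j) p w / p w with hx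
  have hxpos : ∀ w, 0 < x w := fun w => by
    have := hA w; have := hB w; have := hC w; have := hp w
    simp only [hx]; positivity
  have hlog : ∀ w, Real.log (p w * marg (RA i j) p w / (marg (RB i j) p w * marg (RC i j) p w)) =
      - Real.log (x w) := by
    intro w
    have := hA w; have := hB w; have := hC w; have := hp w
    rw [← Real.log_inv]
    congr 1
    simp only [hx]
    field_simp
  simp only [hlog] at hM
  have hterm : ∀ w, 0 ≤ p w * (x w - 1 - Real.log (x w)) := fun w =>
    mul_nonneg (hp' w) (by linarith [Real.log_le_sub_one_of_pos (hxpos w)])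
  have hs : ∑ w, p w * (x w - 1 - Real.log (x w)) ≤ 0 := by
    have : ∑ w, p w * (x w - 1 - Real.log (x w)) = ∑ w, p w * x w - ∑ w, p w +
        ∑ w, p w * -Real.log (x w) := by
      rw [← Finset.sum_sub_distrib, ← Finset.sum_add_distrib]
      exact Finset.sum_congr rfl fun w _ => by ring
    linarith
  have h0 := (Finset.sum_eq_zero_iff_of_nonneg fun w _ => hterm w).1
    (le_antisymm hs (Finset.sum_nonneg fun w _ => hterm w)) w (Finset.mem_univ w)
  have hx1 : x w = 1 := by
    by_contra hne
    have := Real.log_lt_sub_one_of_pos (hxpos w) hne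
    have := mul_pos (hp w) (sub_pos.2 this)
    linarith
  have := hA w; have := hp w
  simp only [hx] at hx1
  field_simp at hx1
  linarith

lemma condMI_pos' (Q : MBlk 𝒳 m k → MSym 𝒳 m → ℝ) (π : MBlk 𝒳 m k → ℝ)
    (hQpos : ∀ h s, 0 < Q h s) (hπ : ∀ h, 0 < π h)
    (i j : Fin m) (hij : i ≠ j) (hf : ¬ MIsFactorizedAt Q i j) :
    0 < mCondMI (fun w : MBlk 𝒳 m (k+1) => π (hist w) * Q (hist w) (lst w)) i j := by
  by_contra hM
  push Not at hM
  apply hf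
  set p := (fun w : MBlk 𝒳 m (k+1) => π (hist w) * Q (hist w) (lst w)) with hpdef
  have hp : ∀ w, 0 < p w := fun w => mul_pos (hπ _) (hQpos _ _)
  have hp' := fun w => (hp w).le
  have key := condMI_pos i j hij p hp hM
  refine ⟨fun h s => marg (RC i j) p (comb h s) / π h,
    fun h s => marg (RB i j) p (comb h s) / marg (RA i j) p (comb h s), ?_, ?_, ?_⟩
  · intro h s s' hs
    simp only
    congr 1
    refine marg_congr _ (RC_equiv i j) p _ _ ⟨?_, ?_, ?_⟩
    · simp [comb, hs i hij]
    · simp [comb]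
    · intro l _ b; simp [comb, hs l b]
  · intro h h' s s' hj sj hl
    simp only
    have hb : RB i j (comb h s) (comb h' s') := by
      refine ⟨by simp [comb, hj, sj], fun l a b => ?_⟩
      simp [comb, hl l a b]
    rw [marg_congr _ (RB_equiv i j) p _ _ hb,
      marg_congr _ (RA_equiv i j) p _ _ ⟨by rw [hb.1], hb.2⟩]
  · intro h s
    have := key (comb h s)
    have e : p (comb h s) = π h * Q h s := by simp only [hpdef, hist_comb, lst_comb]
    rw [e] at this
    have h1 := hπ h
    have h2 : 0 < marg (RA i j) p (comb h s) :=
      marg_pos p hp' _ _ (hp _) ((RA_equiv i j).refl _)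
    field_simp
    linarith

lemma condMI_cont (i j : Fin m) (p : MBlk 𝒳 m (k+1) → ℝ) (hp : ∀ w, 0 < p w) :
    ContinuousAt (fun q : MBlk 𝒳 m (k+1) → ℝ => mCondMI q i j) p := by
  have hp' := fun w => (hp w).le
  unfold mCondMI
  simp only [mMargA_eq, mMargB_eq, mMargC_eq]
  have hc : ∀ (R : MBlk 𝒳 m (k+1) → MBlk 𝒳 m (k+1) → Prop) w,
      Continuous fun q : MBlk 𝒳 m (k+1) → ℝ => marg R q w := by
    intro R w
    unfold marg
    refine continuous_finsetSum _ fun w' _ => ?_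
    split_ifs
    · exact continuous_apply w'
    · exact continuous_const
  refine tendsto_finsetSum _ fun w _ => ?_
  have hA := marg_pos p hp' _ w (hp w) ((RA_equiv i j).refl w)
  have hB := marg_pos p hp' _ w (hp w) ((RB_equiv i j).refl w)
  have hC := marg_pos p hp' _ w (hp w) ((RC_equiv i j).refl w)
  have := hp w
  have c0 : ContinuousAt (fun q : MBlk 𝒳 m (k+1) → ℝ => q w) p := (continuous_apply w).continuousAt
  exact c0.mul (((c0.mul (hc (RA i j) w).continuousAt).div
    ((hc (RB i j) w).continuousAt.mul (hc (RC i j) w).continuousAt) (mul_pos hB hC).ne').log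
    (div_pos (mul_pos (hp w) hA) (mul_pos hB hC)).ne')

lemma condMI_near (i j : Fin m) (p : MBlk 𝒳 m (k+1) → ℝ) (hp : ∀ w, 0 < p w)
    (hM : 0 < mCondMI p i j) : ∃ δ > 0, ∀ q : MBlk 𝒳 m (k+1) → ℝ, (∀ w, |q w - p w| < δ) →
      mCondMI p i j / 2 < mCondMI q i j := by
  have h := (condMI_cont i j p hp).eventually_const_lt (half_lt_self hM)
  obtain ⟨δ, hδ, hb⟩ := Metric.eventually_nhds_iff.1 h
  refine ⟨δ, hδ, fun q hq => hb ?_⟩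
  rw [dist_pi_lt_iff hδ]
  intro w
  rw [Real.dist_eq]
  exact hq w

end nonfact
end DIG

open MeasureTheory Filter Finset
open scoped BigOperators Topology ENNReal NNReal Classical

namespace DIG
section inst
set_option linter.unusedSectionVars false
variable {𝒳 : Type*} [Fintype 𝒳] [DecidableEq 𝒳] [Nonempty 𝒳] {m : ℕ}
variable {Ω : Type*} [MeasurableSpace Ω]

/-- history process -/
def Hp (X : Fin m → ℕ → Ω → 𝒳) (k t : ℕ) (ω : Ω) : MBlk 𝒳 m k := fun l i => X l (t + i) ω

/-- symbol process -/
def Sp (X : Fin m → ℕ → Ω → 𝒳) (k t : ℕ) (ω : Ω) : MSym 𝒳 m := fun l => X l (t + k) ω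

/-- shift a history -/
def stp {k : ℕ} (h : MBlk 𝒳 m k) (s : MSym 𝒳 m) : MBlk 𝒳 m k := fun l i =>
  if hi : i.1 + 1 < k then h l ⟨i.1 + 1, hi⟩ else s l

lemma stp_eq (X : Fin m → ℕ → Ω → 𝒳) (k t : ℕ) (ω : Ω) :
    Hp X k (t + 1) ω = stp (Hp X k t ω) (Sp X k t ω) := by
  funext l i
  unfold Hp stp Sp
  split_ifs with hi
  · congr 1; simp only; omega
  · have := i.2
    congr 1; omega

lemma stp_reach {k : ℕ} (A : Set (MBlk 𝒳 m k)) (hA : A.Nonempty)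
    (hc : ∀ h ∈ A, ∀ s, stp h s ∈ A) (h : MBlk 𝒳 m k) : h ∈ A := by
  have key : ∀ j ≤ k, ∃ g ∈ A, ∀ (l : Fin m) (i i' : Fin k), i.1 = k - j + i'.1 → i'.1 < j →
      g l i = h l i' := by
    intro j
    induction j with
    | zero =>
      intro _
      obtain ⟨g, hg⟩ := hA
      exact ⟨g, hg, fun l i i' _ h => absurd h (by omega)⟩
    | succ j ih =>
      intro hj
      obtain ⟨g, hg, he⟩ := ih (by omega)
      refine ⟨stp g (fun l => h l ⟨j, by omega⟩), hc g hg _, ?_⟩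
      intro l i i' h1 h2
      unfold stp
      split_ifs with hi
      · exact he l _ i' (by simp only; omega) (by omega)
      · have := i.2
        exact congrArg (h l) (Fin.ext (by simp only; omega))
  obtain ⟨g, hg, he⟩ := key k le_rfl
  have : g = h := by
    funext l i
    exact he l i i (by simp) i.2
  rwa [← this]

lemma samePast_iff (X : Fin m → ℕ → Ω → 𝒳) (k t : ℕ) (ω ω₀ : Ω) :
    SamePast (Hp X k) (Sp X k) t ω ω₀ ↔
      ω ∈ mblockEvent X 0 t (fun l i => X l i ω₀) ∩ mblockEvent X t k (Hp X k t ω₀) := by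
  have e : SamePast (Hp X k) (Sp X k) t ω ω₀ ↔ ∀ l u, u < t + k → X l u ω = X l u ω₀ := by
    unfold SamePast Hp Sp
    constructor
    · rintro ⟨h1, h2⟩ l u hu
      by_cases hk : u < k
      · have := congrFun (congrFun h1 l) ⟨u, hk⟩
        simpa using this
      · have := congrFun (h2 (u - k) (by omega)) l
        rwa [Nat.sub_add_cancel (by omega)] at this
    · intro h
      refine ⟨?_, fun u hu => ?_⟩
      · funext l i
        exact h l _ (by have := i.2; omega)
      · funext l
        exact h l _ (by omega)
  rw [e]
  simp only [Set.mem_inter_iff, mblockEvent, Set.mem_ofPred_eq, Hp]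
  constructor
  · intro h
    refine ⟨fun l i => ?_, fun l i => h l _ (by have := i.2; omega)⟩
    rw [zero_add]
    exact h l _ (by have := i.2; omega)
  · rintro ⟨h1, h2⟩ l u hu
    by_cases hk : u < t
    · have := h1 l ⟨u, hk⟩
      simpa using this
    · have := h2 l ⟨u - t, by omega⟩
      simp only at this
      rwa [Nat.add_sub_cancel' (by omega)] at this

lemma mblockEvent_eq (X : Fin m → ℕ → Ω → 𝒳) (k t : ℕ) (h : MBlk 𝒳 m k) :
    mblockEvent X t k h = {ω | Hp X k t ω = h} := by
  ext ω
  simp only [mblockEvent, Set.mem_ofPred_eq, Hp, funext_iff]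

lemma meas_H (X : Fin m → ℕ → Ω → 𝒳) (k t : ℕ)
    (hmeas : ∀ (l : Fin m) (t : ℕ) (x : 𝒳), MeasurableSet {ω | X l t ω = x}) (h : MBlk 𝒳 m k) :
    MeasurableSet {ω | Hp X k t ω = h} := by
  rw [← mblockEvent_eq]
  have : mblockEvent X t k h = ⋂ l, ⋂ i : Fin k, {ω | X l (t + i) ω = h l i} := by
    ext ω; simp [mblockEvent]
  rw [this]
  exact MeasurableSet.iInter fun l => MeasurableSet.iInter fun i => hmeas _ _ _

lemma meas_S (X : Fin m → ℕ → Ω → 𝒳) (k t : ℕ)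
    (hmeas : ∀ (l : Fin m) (t : ℕ) (x : 𝒳), MeasurableSet {ω | X l t ω = x}) (s : MSym 𝒳 m) :
    MeasurableSet {ω | Sp X k t ω = s} := by
  have : {ω | Sp X k t ω = s} = ⋂ l, {ω | X l (t + k) ω = s l} := by
    ext ω; simp [Sp, funext_iff]
  rw [this]
  exact MeasurableSet.iInter fun l => hmeas _ _ _

lemma chain_inst (μ : Measure Ω) [IsProbabilityMeasure μ]
    (X : Fin m → ℕ → Ω → 𝒳) (k : ℕ) (Q : MBlk 𝒳 m k → MSym 𝒳 m → ℝ)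
    (hmeas : ∀ (l : Fin m) (t : ℕ) (x : 𝒳), MeasurableSet {ω | X l t ω = x})
    (hQ : MIsTransMat Q) (hQpos : ∀ h s, 0 < Q h s)
    (hMarkov : MMarkovOfOrder μ X k Q) (hstat : MStationary μ X) :
    Chain μ Q (fun h => μ.real {ω | Hp X k 0 ω = h}) stp (Hp X k) (Sp X k) := by
  have hH := meas_H X k 0 hmeas
  have hS := fun t => meas_S X k t hmeas
  have hm0 : ∀ h s, μ.real {ω | (Hp X k 0 ω, Sp X k 0 ω) = (h, s)} =
      μ.real {ω | Hp X k 0 ω = h} * Q h s := by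
    intro h s
    have := hMarkov 0 (fun _ i => i.elim0) h s
    have e0 : mblockEvent X 0 0 (fun _ i => i.elim0) = Set.univ := by
      ext ω; simp [mblockEvent]
    rw [e0, Set.univ_inter, mblockEvent_eq] at this
    rw [mul_comm]
    refine Eq.trans ?_ this
    unfold mreal Measure.real
    congr 2
    ext ω
    simp [Sp, funext_iff]
  have psum : ∑ h, μ.real {ω | Hp X k 0 ω = h} = 1 := by
    have := (integral_finval (𝕜 := ℝ) μ (Hp X k 0) hH (fun _ => 1)).2
    simpa using this.symm
  have inv : ∀ f : MBlk 𝒳 m k → ℝ, ∑ h, μ.real {ω | Hp X k 0 ω = h} *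
      ∑ s, Q h s * f (stp h s) = ∑ h, μ.real {ω | Hp X k 0 ω = h} * f h := by
    intro f
    have h1 := (integral_finval (𝕜 := ℝ) μ (Hp X k 1) (meas_H X k 1 hmeas) f).2
    have h2 := (integral_finval (𝕜 := ℝ) μ (fun ω => (Hp X k 0 ω, Sp X k 0 ω)) (by
      rintro ⟨h, s⟩
      have : {ω | (Hp X k 0 ω, Sp X k 0 ω) = (h, s)} =
        {ω | Hp X k 0 ω = h} ∩ {ω | Sp X k 0 ω = s} := by ext ω; simp
      rw [this]
      exact (hH h).inter (hS 0 s)) (fun x => f (stp x.1 x.2))).2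
    have h3 : ∀ ω, f (Hp X k 1 ω) = f (stp (Hp X k 0 ω) (Sp X k 0 ω)) := fun ω => by
      rw [← stp_eq]
    have h4 : ∀ h, μ.real {ω | Hp X k 1 ω = h} = μ.real {ω | Hp X k 0 ω = h} := by
      intro h
      rw [← mblockEvent_eq, ← mblockEvent_eq]
      unfold Measure.real
      rw [hstat 1 k h]
    simp only [h3, h4] at h1
    simp only [RCLike.ofReal_real_eq_id, id_eq] at h1 h2
    rw [← h1, h2, Fintype.sum_prod_type]
    refine Finset.sum_congr rfl fun h _ => ?_
    rw [Finset.mul_sum]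
    refine Finset.sum_congr rfl fun s _ => ?_
    rw [hm0]
    ring
  refine ⟨hQpos, hQ.2, ?_, psum, inv, stp_reach, stp_eq X k, hH, hS, ?_⟩
  · refine stp_reach {h | 0 < μ.real {ω | Hp X k 0 ω = h}} ?_ ?_
    · by_contra hne
      rw [Set.not_nonempty_iff_eq_empty] at hne
      have : ∑ h, μ.real {ω | Hp X k 0 ω = h} ≤ 0 := by
        refine Finset.sum_nonpos fun h _ => ?_
        by_contra hh
        have : h ∈ {h | 0 < μ.real {ω | Hp X k 0 ω = h}} := not_le.1 hh
        rw [hne] at this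
        exact this
      linarith
    · intro h hh s
      have hh' : 0 < μ.real {ω | Hp X k 0 ω = h} := hh
      have := inv (fun g => if g = stp h s then 1 else 0)
      have e : ∑ g, μ.real {ω | Hp X k 0 ω = g} * (if g = stp h s then (1:ℝ) else 0) =
        μ.real {ω | Hp X k 0 ω = stp h s} := by simp
      rw [e] at this
      change 0 < μ.real {ω | Hp X k 0 ω = stp h s}
      rw [← this]
      have hn : ∀ g s', 0 ≤ Q g s' * (if stp g s' = stp h s then (1:ℝ) else 0) := fun g s' =>
        mul_nonneg (hQpos _ _).le (by split_ifs <;> norm_num)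
      refine Finset.sum_pos' (fun g _ => mul_nonneg measureReal_nonneg
        (Finset.sum_nonneg fun s' _ => hn g s')) ⟨h, Finset.mem_univ _, mul_pos hh' ?_⟩
      refine Finset.sum_pos' (fun s' _ => hn h s') ⟨s, Finset.mem_univ _, ?_⟩
      simpa using hQpos h s
  · intro t ω₀ s
    have := hMarkov t (fun l i => X l i ω₀) (Hp X k t ω₀) s
    have e1 : {ω | SamePast (Hp X k) (Sp X k) t ω ω₀} =
      mblockEvent X 0 t (fun l i => X l i ω₀) ∩ mblockEvent X t k (Hp X k t ω₀) := by
      ext ω; exact samePast_iff X k t ω ω₀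
    have e2 : {ω | SamePast (Hp X k) (Sp X k) t ω ω₀ ∧ Sp X k t ω = s} =
      mblockEvent X 0 t (fun l i => X l i ω₀) ∩ mblockEvent X t k (Hp X k t ω₀) ∩
        {ω | ∀ l, X l (t + k) ω = s l} := by
      rw [← e1]
      ext ω
      simp [Sp, funext_iff]
    rw [e1, e2]
    exact this

end inst
end DIG

open MeasureTheory Filter Finset
open scoped BigOperators Topology ENNReal NNReal Classical

namespace DIG
section conn
set_option linter.unusedSectionVars false
variable {𝒳 : Type*} [Fintype 𝒳] [DecidableEq 𝒳] [Nonempty 𝒳] {m : ℕ}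
variable {Ω : Type*} [MeasurableSpace Ω]

lemma emp_eq (X : Fin m → ℕ → Ω → 𝒳) (k n : ℕ) (w : MBlk 𝒳 m (k+1)) (ω : Ω) :
    mEmpDist X k n w ω = ((n - k : ℕ) : ℝ)⁻¹ *
      Chain.cnt2 (Hp X k) (Sp X k) (hist w) (lst w) (n - k) ω := by
  unfold mEmpDist Chain.cnt2 Chain.psum'
  congr 1
  refine Finset.sum_congr rfl fun t _ => ?_
  have : (∀ (l : Fin m) (i : Fin (k+1)), X l (t + i) ω = w l i) ↔
      (Hp X k t ω = hist w ∧ Sp X k t ω = lst w) := by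
    constructor
    · intro h
      refine ⟨?_, ?_⟩
      · funext l i
        exact h l i.castSucc
      · funext l
        exact h l (Fin.last k)
    · rintro ⟨h1, h2⟩ l i
      refine Fin.lastCases ?_ (fun i => ?_) i
      · exact congrFun h2 l
      · exact congrFun (congrFun h1 l) i
  beta_reduce
  by_cases hh : Hp X k t ω = hist w ∧ Sp X k t ω = lst w
  · rw [if_pos (this.2 hh), if_pos hh]
  · rw [if_neg (fun h => hh (this.1 h)), if_neg hh]

lemma margH_eq (X : Fin m → ℕ → Ω → 𝒳) (k n : ℕ) (w : MBlk 𝒳 m (k+1)) (ω : Ω) :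
    mMargH (fun w => mEmpDist X k n w ω) w = ((n - k : ℕ) : ℝ)⁻¹ *
      Chain.cnt1 (Hp X k) (Sp X k) (hist w) (n - k) ω := by
  unfold mMargH marg
  rw [← combEquiv.sum_comp, Fintype.sum_prod_type, ← Chain.cnt2_sum, Finset.mul_sum,
    Finset.sum_eq_single (hist w)]
  · refine Finset.sum_congr rfl fun s _ => ?_
    simp only [combEquiv, Equiv.coe_fn_mk, hist_comb, if_true]
    rw [emp_eq, hist_comb, lst_comb]
  · intro h _ hne
    refine Finset.sum_eq_zero fun s _ => ?_
    simp only [combEquiv, Equiv.coe_fn_mk, hist_comb]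
    rw [if_neg hne]
  · simp

lemma mi_le_chi (X : Fin m → ℕ → Ω → 𝒳) (k n : ℕ) (Q : MBlk 𝒳 m k → MSym 𝒳 m → ℝ)
    (hQ : MIsTransMat Q) (hQpos : ∀ h s, 0 < Q h s) (i j : Fin m) (hij : i ≠ j)
    (hf : MIsFactorizedAt Q i j) (ω : Ω) :
    ((n - k : ℕ) : ℝ) * mCondMI (fun w => mEmpDist X k n w ω) i j ≤
      Chain.chiStat Q (Hp X k) (Sp X k) (n - k) ω := by
  set N := n - k with hN
  have hchi0 : 0 ≤ Chain.chiStat Q (Hp X k) (Sp X k) N ω := by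
    unfold Chain.chiStat
    exact Finset.sum_nonneg fun h _ => Finset.sum_nonneg fun s _ => div_nonneg (sq_nonneg _)
      (mul_nonneg (Chain.cnt1_nonneg _ _ _) (hQpos _ _).le)
  rcases Nat.eq_zero_or_pos N with h0 | h0
  · rw [h0, Nat.cast_zero, zero_mul]
    rw [h0] at hchi0
    exact hchi0
  have hNr : (0:ℝ) < N := by exact_mod_cast h0
  have hle := condMI_le Q hQpos hQ.2 i j hij hf (fun w => mEmpDist X k n w ω) (fun w => by
    rw [emp_eq]
    exact mul_nonneg (by positivity) (Chain.cnt2_nonneg _ _ _ _))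
  refine (mul_le_mul_of_nonneg_left hle hNr.le).trans ?_
  rw [← combEquiv.sum_comp, Fintype.sum_prod_type, Finset.mul_sum]
  unfold Chain.chiStat
  refine Finset.sum_le_sum fun h _ => ?_
  rw [Finset.mul_sum]
  set a : MSym 𝒳 m → ℝ := fun s => Chain.cnt2 (Hp X k) (Sp X k) h s N ω with ha
  set b : ℝ := Chain.cnt1 (Hp X k) (Sp X k) h N ω with hb
  have ha0 : ∀ s, 0 ≤ a s := fun s => Chain.cnt2_nonneg _ _ _ _
  have hab : ∑ s, a s = b := Chain.cnt2_sum _ _ _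
  have hb0 : 0 ≤ b := Chain.cnt1_nonneg _ _ _
  have e : ∀ s, (N:ℝ) * (mEmpDist X k n (combEquiv (h, s)) ω *
      Real.log (mEmpDist X k n (combEquiv (h, s)) ω /
        (mMargH (fun w => mEmpDist X k n w ω) (combEquiv (h, s)) *
          Q (hist (combEquiv (h, s))) (lst (combEquiv (h, s)))))) =
      a s * Real.log (a s / (b * Q h s)) := by
    intro s
    rw [margH_eq, emp_eq]
    simp only [combEquiv, Equiv.coe_fn_mk, hist_comb, lst_comb]
    rw [← hN]
    change (N:ℝ) * ((N:ℝ)⁻¹ * a s * Real.log ((N:ℝ)⁻¹ * a s / ((N:ℝ)⁻¹ * b * Q h s))) = _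
    rw [mul_assoc (N:ℝ)⁻¹ b, mul_div_mul_left _ _ (inv_pos.2 hNr).ne', ← mul_assoc,
      mul_inv_cancel_left₀ hNr.ne']
  rw [Finset.sum_congr rfl fun s _ => e s]
  rcases hb0.eq_or_lt with hb1 | hb1
  · have : ∀ s, a s = 0 := by
      intro s
      refine le_antisymm ?_ (ha0 s)
      have := Finset.single_le_sum (fun s _ => ha0 s) (Finset.mem_univ s)
      rw [hab, ← hb1] at this
      exact this
    simp only [this, zero_mul, Finset.sum_const_zero]
    exact Finset.sum_nonneg fun s _ => div_nonneg (sq_nonneg _)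
      (mul_nonneg hb0 (hQpos _ _).le)
  have hterm : ∀ s, a s * Real.log (a s / (b * Q h s)) ≤
      (a s - b * Q h s) ^ 2 / (b * Q h s) + (a s - b * Q h s) := by
    intro s
    have hc : 0 < b * Q h s := mul_pos hb1 (hQpos _ _)
    have e2 : (a s - b * Q h s) ^ 2 / (b * Q h s) + (a s - b * Q h s) =
        a s * (a s / (b * Q h s) - 1) := by
      have := (hQpos h s).ne'
      field_simp
      ring
    rw [e2]
    rcases (ha0 s).eq_or_lt with h1 | h1
    · rw [← h1]; simp
    · exact mul_le_mul_of_nonneg_left (Real.log_le_sub_one_of_pos (div_pos h1 hc)) h1.le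
  refine (Finset.sum_le_sum fun s _ => hterm s).trans ?_
  rw [Finset.sum_add_distrib, Finset.sum_sub_distrib, hab, ← Finset.mul_sum, hQ.2, mul_one,
    sub_self, add_zero]

lemma tendsto_sub_nat (k : ℕ) : Tendsto (fun n : ℕ => n - k) atTop atTop :=
  tendsto_sub_atTop_nat k

lemma fact_bound (μ : Measure Ω) [IsProbabilityMeasure μ]
    (X : Fin m → ℕ → Ω → 𝒳) (k : ℕ) (Q : MBlk 𝒳 m k → MSym 𝒳 m → ℝ)
    (hc : Chain μ Q (fun h => μ.real {ω | Hp X k 0 ω = h}) stp (Hp X k) (Sp X k))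
    (hQ : MIsTransMat Q) (hQpos : ∀ h s, 0 < Q h s)
    (Ith : ℝ) (hIth : 0 < Ith) (i j : Fin m) (hij : i ≠ j) (hf : MIsFactorizedAt Q i j)
    (ε : ℝ) (hε : 0 < ε) : ∀ᶠ n in atTop,
    μ.real {ω | estAdj X k n Ith ω i j = true} ≤
      1 - (chiSq ((Fintype.card 𝒳 ^ (m * k) * (Fintype.card 𝒳 ^ m - 1) : ℕ) : ℝ)
            (Set.Iic Ith)).toReal + ε := by
  have hl := hc.chiStat_lim Ith ε hIth hε
    (Fintype.card 𝒳 ^ (m * k) * (Fintype.card 𝒳 ^ m - 1)) (by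
      simp only [Fintype.card_fun, Fintype.card_fin]
      rw [← pow_mul, mul_comm k m])
  filter_upwards [(tendsto_sub_nat k).eventually hl] with n hn
  have hsub : {ω | estAdj X k n Ith ω i j = true} ⊆
      {ω | Chain.chiStat Q (Hp X k) (Sp X k) (n - k) ω < Ith}ᶜ := by
    intro ω hω
    have h1 := mi_le_chi X k n Q hQ hQpos i j hij hf ω
    simp only [Set.mem_ofPred_eq, estAdj, if_neg hij] at hω
    simp only [Set.mem_compl_iff, Set.mem_ofPred_eq, not_lt]
    split_ifs at hω with h2
    exact h2.trans h1
  have hms : MeasurableSet {ω | Chain.chiStat Q (Hp X k) (Sp X k) (n - k) ω < Ith} := by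
    refine measurableSet_lt (hc.adp_meas (t := n - k) ?_) measurable_const
    intro ω ω' h
    unfold Chain.chiStat Chain.cnt1 Chain.cnt2
    simp only [hc.adp_psum _ (n - k) ω ω' h]
  have h3 := measureReal_mono (μ := μ) hsub
  rw [probReal_compl_eq_one_sub hms] at h3
  have h4 : chiSq ((Fintype.card 𝒳 ^ (m * k) * (Fintype.card 𝒳 ^ m - 1) : ℕ) : ℝ) =
    ProbabilityTheory.gammaMeasure
      (((Fintype.card 𝒳 ^ (m * k) * (Fintype.card 𝒳 ^ m - 1) : ℕ) : ℝ) / 2) (1 / 2) := rfl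
  rw [h4]
  linarith

lemma F_le_one (μ : Measure Ω) [IsProbabilityMeasure μ]
    (X : Fin m → ℕ → Ω → 𝒳) (k : ℕ) (Q : MBlk 𝒳 m k → MSym 𝒳 m → ℝ)
    (hc : Chain μ Q (fun h => μ.real {ω | Hp X k 0 ω = h}) stp (Hp X k) (Sp X k))
    (Ith : ℝ) (hIth : 0 < Ith) :
    (chiSq ((Fintype.card 𝒳 ^ (m * k) * (Fintype.card 𝒳 ^ m - 1) : ℕ) : ℝ)
            (Set.Iic Ith)).toReal ≤ 1 := by
  refine le_of_forall_pos_le_add fun ε hε => ?_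
  have hl := hc.chiStat_lim Ith ε hIth hε
    (Fintype.card 𝒳 ^ (m * k) * (Fintype.card 𝒳 ^ m - 1)) (by
      simp only [Fintype.card_fun, Fintype.card_fin]
      rw [← pow_mul, mul_comm k m])
  obtain ⟨n, hn⟩ := hl.exists
  have h1 : μ.real {ω | Chain.chiStat Q (Hp X k) (Sp X k) n ω < Ith} ≤ 1 := measureReal_le_one
  have h4 : chiSq ((Fintype.card 𝒳 ^ (m * k) * (Fintype.card 𝒳 ^ m - 1) : ℕ) : ℝ) =
    ProbabilityTheory.gammaMeasure
      (((Fintype.card 𝒳 ^ (m * k) * (Fintype.card 𝒳 ^ m - 1) : ℕ) : ℝ) / 2) (1 / 2) := rfl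
  rw [h4]
  linarith

lemma nonfact_bound (μ : Measure Ω) [IsProbabilityMeasure μ]
    (X : Fin m → ℕ → Ω → 𝒳) (k : ℕ) (Q : MBlk 𝒳 m k → MSym 𝒳 m → ℝ)
    (hc : Chain μ Q (fun h => μ.real {ω | Hp X k 0 ω = h}) stp (Hp X k) (Sp X k))
    (hQpos : ∀ h s, 0 < Q h s)
    (Ith : ℝ) (i j : Fin m) (hij : i ≠ j) (hf : ¬ MIsFactorizedAt Q i j)
    (ε : ℝ) (hε : 0 < ε) : ∀ᶠ n in atTop,
    μ.real {ω | estAdj X k n Ith ω i j = false} ≤ ε := by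
  set π : MBlk 𝒳 m k → ℝ := fun h => μ.real {ω | Hp X k 0 ω = h} with hπ
  set p : MBlk 𝒳 m (k+1) → ℝ := fun w => π (hist w) * Q (hist w) (lst w) with hp
  have hM : 0 < mCondMI p i j := condMI_pos' Q π hQpos hc.ppos i j hij hf
  obtain ⟨δ, hδ, hnear⟩ := condMI_near i j p (fun w => mul_pos (hc.ppos _) (hQpos _ _)) hM
  set K : ℕ := Fintype.card (MBlk 𝒳 m (k+1)) with hK
  have hε' : 0 < ε / (K + 1) := by positivity
  have hL : ∀ w : MBlk 𝒳 m (k+1), ∀ᶠ N : ℕ in atTop,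
      μ.real {ω | δ * N ≤ |Chain.cnt2 (Hp X k) (Sp X k) (hist w) (lst w) N ω - N * p w|} ≤
        ε / (K + 1) := by
    intro w
    have := hc.lln_prob (fun h' s' => if h' = hist w ∧ s' = lst w then 1 else 0) δ _ hδ hε'
    have e : ∑ h, π h * ∑ s, Q h s * (if h = hist w ∧ s = lst w then (1:ℝ) else 0) = p w := by
      rw [Finset.sum_eq_single (hist w), Finset.sum_eq_single (lst w)]
      · simp [hp]
      · intro s _ hs; simp [hs]
      · simp
      · intro h _ hh; simp [hh]
      · simp
    rw [e] at this
    have hcnt : ∀ (N : ℕ) (ω : Ω), Chain.cnt2 (Hp X k) (Sp X k) (hist w) (lst w) N ω =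
        Chain.psum' (Hp X k) (Sp X k)
          (fun h' s' => if h' = hist w ∧ s' = lst w then 1 else 0) N ω := by
      intro N ω
      unfold Chain.cnt2 Chain.psum'
      refine Finset.sum_congr rfl fun t _ => ?_
      beta_reduce
      by_cases hh : Hp X k t ω = hist w ∧ Sp X k t ω = lst w
      · rw [if_pos hh, if_pos hh]
      · rw [if_neg hh, if_neg hh]
    simp only [hcnt]
    exact this
  have hL' := (tendsto_sub_nat k).eventually (eventually_all.2 hL)
  have hbig : ∀ᶠ N : ℕ in atTop, Ith ≤ (N:ℝ) * (mCondMI p i j / 2) :=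
    (tendsto_natCast_atTop_atTop.atTop_mul_const (half_pos hM)).eventually_ge_atTop Ith
  filter_upwards [hL', (tendsto_sub_nat k).eventually hbig,
    (tendsto_sub_nat k).eventually (eventually_ge_atTop 1)] with n h1 h2 h3
  have hN : (0:ℝ) < ((n - k : ℕ) : ℝ) := by exact_mod_cast h3
  have hsub : {ω | estAdj X k n Ith ω i j = false} ⊆
      ⋃ w ∈ (Finset.univ : Finset (MBlk 𝒳 m (k+1))), {ω | δ * ((n - k : ℕ) : ℝ) ≤
        |Chain.cnt2 (Hp X k) (Sp X k) (hist w) (lst w) (n - k) ω - ((n - k : ℕ) : ℝ) * p w|} := by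
    intro ω hω
    by_contra hcon
    simp only [Set.mem_iUnion, Finset.mem_univ, exists_true_left, Set.mem_ofPred_eq, not_exists,
      not_le] at hcon
    have hq := hnear (fun w => mEmpDist X k n w ω) (fun w => by
      rw [emp_eq]
      have := hcon w
      have e : ((n - k : ℕ) : ℝ)⁻¹ * Chain.cnt2 (Hp X k) (Sp X k) (hist w) (lst w) (n - k) ω - p w =
        (Chain.cnt2 (Hp X k) (Sp X k) (hist w) (lst w) (n - k) ω - ((n - k : ℕ) : ℝ) * p w) /
          ((n - k : ℕ) : ℝ) := by
        field_simp
      rw [e, abs_div, abs_of_pos hN, div_lt_iff₀ hN]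
      exact this)
    simp only [Set.mem_ofPred_eq, estAdj, if_neg hij] at hω
    split_ifs at hω with h4
    exact h4 (h2.trans (mul_le_mul_of_nonneg_left hq.le hN.le))
  refine (measureReal_mono hsub (measure_ne_top _ _)).trans ((measureReal_biUnion_finset_le _ _).trans ?_)
  refine (Finset.sum_le_sum fun w _ => h1 w).trans ?_
  rw [Finset.sum_const, Finset.card_univ, ← hK, nsmul_eq_mul]
  rw [mul_div_assoc', div_le_iff₀ (by positivity)]
  nlinarith

end conn
end DIG

namespace DIG

variable {𝒳 : Type*} [Fintype 𝒳] [DecidableEq 𝒳] [Nonempty 𝒳]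
variable {Ω : Type*} [MeasurableSpace Ω]

/-- Bounds on the asymptotic false-alarm and detection probabilities of
the hypothesis test for the whole graph: if the true adjacency matrix differs from the
hypothesis `V*` then `limsup P(V̂ = V*) ≤ 1 − F_r(I_th)`, and if they coincide then
`liminf P(V̂ = V*) ≥ max{1 − N₀(1 − F_r(I_th)), 0}`, with `r = |𝒳|^{mk}(|𝒳|^m − 1)`,
`N₁` the number of off-diagonal ones of `V*` and `N₀ = m(m−1) − N₁`. -/
theorem graph_hypothesis_test_bounds
    (μ : MeasureTheory.Measure Ω) [MeasureTheory.IsProbabilityMeasure μ]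
    {m : ℕ} (X : Fin m → ℕ → Ω → 𝒳) (k : ℕ) (Q : MBlk 𝒳 m k → MSym 𝒳 m → ℝ)
    (hmeas : ∀ (l : Fin m) (t : ℕ) (x : 𝒳), MeasurableSet {ω | X l t ω = x})
    (hQ : MIsTransMat Q) (hQpos : ∀ h s, 0 < Q h s)
    (hMarkov : MMarkovOfOrder μ X k Q)
    (hstat : MStationary μ X)
    (hA3 : MCondIndepPast μ X k)
    (Ith : ℝ) (hIth : 0 < Ith)
    (Vstar : Fin m → Fin m → Bool) (hdiag : ∀ i, Vstar i i = false) :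
    ((∃ i j : Fin m, i ≠ j ∧ ((Vstar i j = true) ↔ MIsFactorizedAt Q i j)) →
      Filter.limsup
          (fun n => mreal μ {ω | ∀ i j, estAdj X k n Ith ω i j = Vstar i j}) atTop
        ≤ 1 - (chiSq ((Fintype.card 𝒳 ^ (m * k) * (Fintype.card 𝒳 ^ m - 1) : ℕ) : ℝ)
            (Set.Iic Ith)).toReal) ∧
    ((∀ i j : Fin m, i ≠ j → ((Vstar i j = true) ↔ ¬ MIsFactorizedAt Q i j)) →
      max (1 - ((m * (m - 1) -
            (Finset.univ.filter
              (fun pr : Fin m × Fin m => pr.1 ≠ pr.2 ∧ Vstar pr.1 pr.2 = true)).card : ℕ) : ℝ) *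
          (1 - (chiSq ((Fintype.card 𝒳 ^ (m * k) * (Fintype.card 𝒳 ^ m - 1) : ℕ) : ℝ)
            (Set.Iic Ith)).toReal)) 0
        ≤ Filter.liminf
            (fun n => mreal μ {ω | ∀ i j, estAdj X k n Ith ω i j = Vstar i j}) atTop) := by
  have hc := chain_inst μ X k Q hmeas hQ hQpos hMarkov hstat
  have hF1 := F_le_one μ X k Q hc Ith hIth
  have hfb := fact_bound μ X k Q hc hQ hQpos Ith hIth
  have hnb := nonfact_bound μ X k Q hc hQpos Ith
  set F : ℝ := (chiSq ((Fintype.card 𝒳 ^ (m * k) * (Fintype.card 𝒳 ^ m - 1) : ℕ) : ℝ)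
            (Set.Iic Ith)).toReal with hF
  set f : ℕ → ℝ := fun n => mreal μ {ω | ∀ i j, estAdj X k n Ith ω i j = Vstar i j} with hfdef
  have hf0 : ∀ n, 0 ≤ f n := fun n => ENNReal.toReal_nonneg
  have hf1 : ∀ n, f n ≤ 1 := fun n => measureReal_le_one (μ := μ)
  have hbdd1 : IsBoundedUnder (· ≤ ·) atTop f := isBoundedUnder_of ⟨1, hf1⟩
  have hbdd2 : IsBoundedUnder (· ≥ ·) atTop f := isBoundedUnder_of ⟨0, hf0⟩
  constructor
  · rintro ⟨i, j, hij, hV⟩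
    refine le_of_forall_pos_le_add fun ε hε => ?_
    refine limsup_le_of_le hbdd2.isCoboundedUnder_le ?_
    by_cases hfac : MIsFactorizedAt Q i j
    · filter_upwards [hfb i j hij hfac ε hε] with n hn
      refine le_trans ?_ hn
      refine measureReal_mono (μ := μ) (fun ω hω => ?_)
      have h1 : ∀ i j, estAdj X k n Ith ω i j = Vstar i j := hω
      exact (h1 i j).trans (hV.2 hfac)
    · filter_upwards [hnb i j hij hfac ε hε] with n hn
      have h2 : f n ≤ μ.real {ω | estAdj X k n Ith ω i j = false} := by
        refine measureReal_mono (μ := μ) (fun ω hω => ?_)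
        have h1 : ∀ i j, estAdj X k n Ith ω i j = Vstar i j := hω
        refine (h1 i j).trans ?_
        by_contra hne
        exact hfac (hV.1 (by simpa using hne))
      linarith
  · intro hV
    refine max_le ?_ (le_liminf_of_le hbdd1.isCoboundedUnder_ge (Eventually.of_forall hf0))
    set P1 := Finset.univ.filter
      (fun pr : Fin m × Fin m => pr.1 ≠ pr.2 ∧ Vstar pr.1 pr.2 = true) with hP1
    set P0 := Finset.univ.filter
      (fun pr : Fin m × Fin m => pr.1 ≠ pr.2 ∧ Vstar pr.1 pr.2 = false) with hP0
    have hcard : m * (m - 1) - P1.card = P0.card := by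
      have h1 : (Finset.univ.offDiag : Finset (Fin m × Fin m)).card = m * (m - 1) := by
        rw [Finset.offDiag_card, Finset.card_univ, Fintype.card_fin, Nat.mul_sub, mul_one]
      have h2 : (Finset.univ.offDiag : Finset (Fin m × Fin m)) = P1 ∪ P0 := by
        ext pr
        simp only [hP1, hP0, Finset.mem_offDiag, Finset.mem_union, Finset.mem_filter,
          Finset.mem_univ, true_and]
        cases Vstar pr.1 pr.2 <;> simp
      have h3 : Disjoint P1 P0 := by
        rw [Finset.disjoint_left]
        intro pr h4 h5
        have h6 := (Finset.mem_filter.1 h4).2.2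
        have h7 := (Finset.mem_filter.1 h5).2.2
        rw [h6] at h7
        exact absurd h7 (by decide)
      rw [h2, Finset.card_union_of_disjoint h3] at h1
      omega
    rw [hcard]
    refine le_of_forall_pos_le_add fun ε hε => ?_
    rw [← sub_le_iff_le_add]
    refine le_liminf_of_le hbdd1.isCoboundedUnder_ge ?_
    set ε' : ℝ := ε / (P0.card + P1.card + 1) with hε'd
    have hε' : 0 < ε' := by positivity
    have hA0 : ∀ᶠ n in atTop, ∀ pr ∈ P0,
        μ.real {ω | estAdj X k n Ith ω pr.1 pr.2 = true} ≤ 1 - F + ε' := by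
      rw [Filter.eventually_all_finset]
      intro pr hpr
      obtain ⟨h1, h2⟩ := (Finset.mem_filter.1 hpr).2
      refine hfb pr.1 pr.2 h1 ?_ ε' hε'
      by_contra hne
      have := (hV pr.1 pr.2 h1).2 hne
      rw [h2] at this
      exact absurd this (by decide)
    have hA1 : ∀ᶠ n in atTop, ∀ pr ∈ P1,
        μ.real {ω | estAdj X k n Ith ω pr.1 pr.2 = false} ≤ ε' := by
      rw [Filter.eventually_all_finset]
      intro pr hpr
      obtain ⟨h1, h2⟩ := (Finset.mem_filter.1 hpr).2
      exact hnb pr.1 pr.2 h1 ((hV pr.1 pr.2 h1).1 h2) ε' hε'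
    filter_upwards [hA0, hA1] with n h0 h1
    have hcov : (Set.univ : Set Ω) ⊆ {ω | ∀ i j, estAdj X k n Ith ω i j = Vstar i j} ∪
        ((⋃ pr ∈ P0, {ω | estAdj X k n Ith ω pr.1 pr.2 = true}) ∪
          ⋃ pr ∈ P1, {ω | estAdj X k n Ith ω pr.1 pr.2 = false}) := by
      intro ω _
      by_contra hcon
      simp only [Set.mem_union, Set.mem_iUnion, Set.mem_ofPred_eq, not_or, not_exists] at hcon
      obtain ⟨h2, h3, h4⟩ := hcon
      apply h2
      intro i j
      by_cases hij : i = j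
      · subst hij
        rw [hdiag]
        simp [estAdj]
      · cases hVij : Vstar i j with
        | true =>
          have := h4 (i, j) (Finset.mem_filter.2 ⟨Finset.mem_univ _, hij, hVij⟩)
          simpa using this
        | false =>
          have := h3 (i, j) (Finset.mem_filter.2 ⟨Finset.mem_univ _, hij, hVij⟩)
          simpa using this
    have hu := measureReal_mono (μ := μ) hcov (measure_ne_top _ _)
    rw [probReal_univ] at hu
    have hu2 := hu.trans (measureReal_union_le _ _)
    have hu3 := measureReal_union_le (μ := μ)
      (⋃ pr ∈ P0, {ω | estAdj X k n Ith ω pr.1 pr.2 = true})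
      (⋃ pr ∈ P1, {ω | estAdj X k n Ith ω pr.1 pr.2 = false})
    have hu4 := (measureReal_biUnion_finset_le (μ := μ) P0
      (fun pr => {ω | estAdj X k n Ith ω pr.1 pr.2 = true})).trans (Finset.sum_le_sum h0)
    have hu5 := (measureReal_biUnion_finset_le (μ := μ) P1
      (fun pr => {ω | estAdj X k n Ith ω pr.1 pr.2 = false})).trans (Finset.sum_le_sum h1)
    rw [Finset.sum_const, nsmul_eq_mul] at hu4 hu5
    have hfn : f n = μ.real {ω | ∀ i j, estAdj X k n Ith ω i j = Vstar i j} := rfl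
    have hee : ε' * (P0.card + P1.card + 1) = ε := by
      rw [hε'd]
      field_simp
    rw [← hfn] at hu2
    nlinarith

end DIG
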